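/- arXiv:1306.0323 — 3 statements merged into one kernel-verified Lean document; each statement's English description precedes it below -/
import Mathlib

section
/- Assume p = 1 a.e., that w has exactly n turning points in (a,b), and that ∫ₐᵇ w ≠ 0; set δ := 2 + 2‖w‖_{L¹}/|∫ₐᵇ w|. Fix l, r ∈ ℝ and set α := |l| + |r| + ‖q₋‖_{L¹}. Let ε > 0 satisfy μ₁({x ∈ (a,b) : |w(x)| < ε}) ≤ 1/(4αδ²), where μ₁ is Lebesgue measure. Then every λ ∈ ℂ with Im λ ≠ 0 for which there exists a solution (φ, u) of −φ'' + qφ = λwφ with φ not identically zero and u(a) = l·φ(a), u(b) = r·φ(b), satisfies |Im λ| ≤ (8/ε)·α²·δ³·(n+1) and |Re λ| ≤ (2/ε)·α·δ²·(4αδ(n+1) + α + ‖q‖_{L¹}). -/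
open MeasureTheory Real Complex

/-!
Let `φ` be an eigenfunction for the non-real eigenvalue `λ` and `u = φ'`. The function
`T = conj φ * u` has derivative `|u|² + (q - λ w) |φ|²` and is real at the endpoints. Integrating
the imaginary part gives `∫ w |φ|² = 0`, and the real part then gives `∫ |u|² ≤ α sup |φ|²`.
Since `|φ|²` has `w`-mean zero, its supremum is controlled by the total variation
`2 ∫ |φ| |u|`, so Cauchy-Schwarz yields `sup |φ|² ≤ B := α δ² ∫ |φ|²`.

To isolate `Im λ` or `Re λ`, multiply the equation for `T'` by a piecewise linear cutoff `g` that
vanishes at the turning points. On each interval of constant sign, integration by parts produces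
no boundary terms and bounds `|Im λ| ∫ |w| |φ|² g` by `∫ |g'| |φ| |u|`, and likewise for `Re λ`
up to the terms `|u|² + |q| |φ|²`. The mass of `|φ|²` on the set `|w| < ε` and near the turning
points is at most half of the total, so `∫ |w| |φ|² g ≥ (ε / 2) ∫ |φ|²`, while Cauchy-Schwarz on
the support of `g'` bounds the right-hand side by a multiple of `B`.
-/

namespace SturmLiouville

open Set
open scoped ComplexConjugate

section Primitive

variable {E F : Type*} [NormedAddCommGroup E] [NormedAddCommGroup F]

theorem absolutelyContinuousOnInterval_of_dist_le {f : ℝ → E} {g : ℝ → F} {C a b : ℝ}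
    (hg : AbsolutelyContinuousOnInterval g a b)
    (h : ∀ s ∈ uIcc a b, ∀ t ∈ uIcc a b, dist (f s) (f t) ≤ C * dist (g s) (g t)) :
    AbsolutelyContinuousOnInterval f a b := by
  have hlim := Filter.Tendsto.const_mul C hg
  rw [mul_zero] at hlim
  refine squeeze_zero' (.of_forall fun I => Finset.sum_nonneg fun _ _ => dist_nonneg) ?_ hlim
  filter_upwards [Filter.mem_inf_of_right (Filter.mem_principal_self _)] with I hI
  rw [Finset.mul_sum]
  exact Finset.sum_le_sum fun i hi => h _ (hI.1 i hi).1 _ (hI.1 i hi).2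

variable [NormedSpace ℝ E] [NormedSpace ℝ F]

theorem absolutelyContinuousOnInterval_integral {f : ℝ → E} {a b : ℝ}
    (hf : IntervalIntegrable f volume a b) :
    AbsolutelyContinuousOnInterval (fun x => ∫ t in a..x, f t) a b := by
  have hsub {s} (hs : s ∈ uIcc a b) : uIcc a s ⊆ uIcc a b := uIcc_subset_uIcc_left hs
  refine absolutelyContinuousOnInterval_of_dist_le (C := 1)
    (hf.norm.absolutelyContinuousOnInterval_intervalIntegral left_mem_uIcc) fun s hs t ht => ?_
  rw [one_mul, dist_comm (∫ v in a..s, f v), dist_comm (∫ v in a..s, ‖f v‖), dist_eq_norm,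
    Real.dist_eq, intervalIntegral.integral_interval_sub_left (hf.mono_set (hsub ht))
      (hf.mono_set (hsub hs)), intervalIntegral.integral_interval_sub_left
      (hf.norm.mono_set (hsub ht)) (hf.norm.mono_set (hsub hs))]
  exact intervalIntegral.norm_integral_le_abs_integral_norm

/-- `F` is an absolutely continuous function on the interval with endpoints `a` and `b` whose
almost-everywhere derivative there is the integrable function `f`. -/
structure IsPrimitiveOn (F f : ℝ → E) (a b : ℝ) : Prop where
  intervalIntegrable : IntervalIntegrable f volume a b
  absolutelyContinuous : AbsolutelyContinuousOnInterval F a b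
  ae_hasDerivAt : ∀ᵐ x, x ∈ uIcc a b → HasDerivAt F (f x) x

namespace IsPrimitiveOn

theorem of_eq_integral [CompleteSpace E] {F f : ℝ → E} {a b : ℝ} (hab : a ≤ b)
    (hf : IntervalIntegrable f volume a b)
    (hF : ∀ y ∈ Icc a b, F y = F a + ∫ t in a..y, f t) : IsPrimitiveOn F f a b where
  intervalIntegrable := hf
  absolutelyContinuous := by
    refine absolutelyContinuousOnInterval_of_dist_le (C := 1)
      (absolutelyContinuousOnInterval_integral hf) fun s hs t ht => ?_
    rw [uIcc_of_le hab] at hs ht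
    rw [one_mul, hF s hs, hF t ht, dist_add_left]
  ae_hasDerivAt := by
    filter_upwards [hf.ae_hasDerivAt_integral, volume.ae_ne a, volume.ae_ne b]
      with x hx hxa hxb hxab
    refine ((hx hxab a left_mem_uIcc).const_add (F a)).congr_of_eventuallyEq ?_
    rw [uIcc_of_le hab] at hxab
    filter_upwards [Icc_mem_nhds (hxab.1.lt_of_ne' hxa) (hxab.2.lt_of_ne hxb)] with y hy
    exact hF y hy

theorem of_absolutelyContinuous {g : ℝ → ℝ} {a b : ℝ}
    (hg : AbsolutelyContinuousOnInterval g a b) : IsPrimitiveOn g (deriv g) a b where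
  intervalIntegrable := hg.intervalIntegrable_deriv
  absolutelyContinuous := hg
  ae_hasDerivAt := hg.ae_differentiableAt.mono fun _ hx hxab => (hx hxab).hasDerivAt

theorem mono {F f : ℝ → E} {a b c d : ℝ} (hF : IsPrimitiveOn F f a b)
    (h : uIcc c d ⊆ uIcc a b) : IsPrimitiveOn F f c d where
  intervalIntegrable := hF.intervalIntegrable.mono_set h
  absolutelyContinuous := hF.absolutelyContinuous.mono h
  ae_hasDerivAt := hF.ae_hasDerivAt.mono fun _ hx hxcd => hx (h hxcd)

theorem congr {F f G g : ℝ → E} {a b : ℝ} (hF : IsPrimitiveOn F f a b) (hFG : ∀ t, F t = G t)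
    (hfg : ∀ t, f t = g t) : IsPrimitiveOn G g a b := by
  rwa [← funext hFG, ← funext hfg]

theorem continuousLinearMap_comp {F' f : ℝ → E} {a b : ℝ} (L : E →L[ℝ] F)
    (hF : IsPrimitiveOn F' f a b) : IsPrimitiveOn (fun t => L (F' t)) (fun t => L (f t)) a b where
  intervalIntegrable :=
    ⟨L.integrable_comp hF.intervalIntegrable.1, L.integrable_comp hF.intervalIntegrable.2⟩
  absolutelyContinuous := absolutelyContinuousOnInterval_of_dist_le hF.absolutelyContinuous
    fun s _ t _ => L.lipschitz.dist_le_mul (F' s) (F' t)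
  ae_hasDerivAt := hF.ae_hasDerivAt.mono fun x hx hxab => L.hasFDerivAt.comp_hasDerivAt x (hx hxab)

theorem smul {𝕜 : Type*} [NormedField 𝕜] [NormedAlgebra ℝ 𝕜] [NormedSpace 𝕜 E]
    [IsScalarTower ℝ 𝕜 E] {G g : ℝ → 𝕜} {F f : ℝ → E} {a b : ℝ} (hG : IsPrimitiveOn G g a b)
    (hF : IsPrimitiveOn F f a b) :
    IsPrimitiveOn (fun t => G t • F t) (fun t => G t • f t + g t • F t) a b where
  intervalIntegrable :=
    (hF.intervalIntegrable.continuousOn_smul hG.absolutelyContinuous.continuousOn).add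
      (hG.intervalIntegrable.smul_continuousOn hF.absolutelyContinuous.continuousOn)
  absolutelyContinuous := hG.absolutelyContinuous.fun_smul hF.absolutelyContinuous
  ae_hasDerivAt := by
    filter_upwards [hG.ae_hasDerivAt, hF.ae_hasDerivAt] with x hx hx' hxab
    exact (hx hxab).fun_smul (hx' hxab)

theorem integral_eq_sub [CompleteSpace E] {F f : ℝ → E} {a b : ℝ} (hF : IsPrimitiveOn F f a b) :
    ∫ t in a..b, f t = F b - F a := by
  have hdiff : AbsolutelyContinuousOnInterval (fun x => F x - ∫ t in a..x, f t) a b :=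
    hF.absolutelyContinuous.sub (absolutelyContinuousOnInterval_integral hF.intervalIntegrable)
  obtain ⟨c, hc⟩ := hdiff.const_of_ae_hasDerivAt_zero (by
    filter_upwards [hF.ae_hasDerivAt, hF.intervalIntegrable.ae_hasDerivAt_integral]
      with x hx hx' hxab
    simpa using (hx hxab).fun_sub (hx' hxab a left_mem_uIcc))
  have hca := hc a left_mem_uIcc
  have hcb := hc b right_mem_uIcc
  rw [intervalIntegral.integral_same, sub_zero] at hca
  rw [hca, ← hcb, sub_sub_cancel]

end IsPrimitiveOn

end Primitive

theorem integral_mul_le_sqrt_mul_sqrt {Ω : Type*} [MeasurableSpace Ω] {μ : Measure Ω}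
    {f g : Ω → ℝ} (hf : MemLp f 2 μ) (hg : MemLp g 2 μ) (hf₀ : 0 ≤ f) (hg₀ : 0 ≤ g) :
    ∫ t, f t * g t ∂μ ≤ √(∫ t, f t ^ 2 ∂μ) * √(∫ t, g t ^ 2 ∂μ) := by
  have h := integral_mul_le_Lp_mul_Lq_of_nonneg Real.HolderConjugate.two_two
    (.of_forall hf₀) (.of_forall hg₀) (by simpa using hf) (by simpa using hg)
  simpa only [Real.sqrt_eq_rpow, Real.rpow_two] using h

section Cutoff

open Metric

/-- The piecewise linear function that vanishes on `X` and equals `1` at distance at least `η`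
from `X`; it is the test function that keeps away from the turning points. -/
noncomputable def cutoff {η : ℝ} (hη : 0 < η) (X : Set ℝ) (t : ℝ) : ℝ :=
  1 - thickenedIndicator hη X t

variable {η : ℝ} (hη : 0 < η) (X : Set ℝ)

theorem cutoff_nonneg (t : ℝ) : 0 ≤ cutoff hη X t :=
  sub_nonneg.2 (mod_cast thickenedIndicator_le_one hη X t)

theorem cutoff_le_one (t : ℝ) : cutoff hη X t ≤ 1 :=
  sub_le_self _ (NNReal.coe_nonneg _)

variable {X} in
theorem cutoff_eq_zero {t : ℝ} (ht : t ∈ X) : cutoff hη X t = 0 := by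
  simp [cutoff, thickenedIndicator_one hη X ht]

variable {X} in
theorem cutoff_eq_one {t : ℝ} (ht : t ∉ thickening η X) : cutoff hη X t = 1 := by
  simp [cutoff, thickenedIndicator_zero hη X ht]

theorem lipschitzWith_cutoff : LipschitzWith η.toNNReal⁻¹ (cutoff hη X) := by
  refine .of_dist_le_mul fun s t => ?_
  rw [cutoff, cutoff, dist_sub_left]
  exact (lipschitzWith_thickenedIndicator hη X).dist_le_mul s t

theorem isPrimitiveOn_cutoff (a b : ℝ) :
    IsPrimitiveOn (cutoff hη X) (deriv (cutoff hη X)) a b :=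
  .of_absolutelyContinuous
    (lipschitzWith_cutoff hη X).lipschitzOnWith.absolutelyContinuousOnInterval

theorem abs_deriv_cutoff_le (t : ℝ) :
    |deriv (cutoff hη X) t| ≤ (thickening η X).indicator (fun _ => η⁻¹) t := by
  by_cases ht : t ∈ thickening η X
  · rw [indicator_of_mem ht]
    simpa [hη.le] using norm_deriv_le_of_lipschitz (x₀ := t) (lipschitzWith_cutoff hη X)
  · have hmax : IsLocalMax (cutoff hη X) t :=
      .of_forall fun s => (cutoff_le_one hη X s).trans_eq (cutoff_eq_one hη ht).symm
    rw [indicator_of_notMem ht, hmax.deriv_eq_zero, abs_zero]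

end Cutoff

theorem integral_abs_eq_abs_integral {Ω : Type*} [MeasurableSpace Ω] {μ : Measure Ω} {f : Ω → ℝ}
    (h : 0 ≤ᵐ[μ] f ∨ f ≤ᵐ[μ] 0) : ∫ t, |f t| ∂μ = |∫ t, f t ∂μ| := by
  rcases h with h | h
  · rw [abs_of_nonneg (integral_nonneg_of_ae h)]
    exact integral_congr_ae (h.mono fun t ht => abs_of_nonneg ht)
  · rw [abs_of_nonpos (integral_nonpos_of_ae h), ← integral_neg]
    exact integral_congr_ae (h.mono fun t ht => abs_of_nonpos ht)

theorem mul_integral_sub_le_integral_mul {Ω : Type*} [MeasurableSpace Ω] {μ : Measure Ω}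
    {f E : Ω → ℝ} {A : Set Ω} {B ε ρ : ℝ} (hε : 0 ≤ ε) (hρ : 0 ≤ ρ)
    (hA : μ A ≤ ENNReal.ofReal ρ) (hf : 0 ≤ f) (hfA : ∀ᵐ t ∂μ, t ∉ A → ε ≤ f t) (hB : 0 ≤ B)
    (hE : 0 ≤ E) (hEB : ∀ᵐ t ∂μ, E t ≤ B) (hEint : Integrable E μ)
    (hfE : Integrable (fun t => f t * E t) μ) :
    ε * ((∫ t, E t ∂μ) - B * ρ) ≤ ∫ t, f t * E t ∂μ := by
  set A' := toMeasurable μ A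
  have hA'meas : MeasurableSet A' := measurableSet_toMeasurable μ A
  have hA'ρ : μ A' ≤ ENNReal.ofReal ρ := (measure_toMeasurable A).trans_le hA
  have hbad : ∫ t in A', E t ∂μ ≤ B * ρ := by
    calc ∫ t in A', E t ∂μ
        ≤ B * μ.real A' := (le_abs_self _).trans <| norm_setIntegral_le_of_norm_le_const_ae'
          (hA'ρ.trans_lt ENNReal.ofReal_lt_top)
          (hEB.mono fun t ht _ => (Real.norm_of_nonneg (hE t)).trans_le ht)
      _ ≤ B * ρ := by gcongr; exact ENNReal.toReal_le_of_le_ofReal hρ hA'ρ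
  have hgood : ε * ∫ t in A'ᶜ, E t ∂μ ≤ ∫ t, f t * E t ∂μ := by
    calc ε * ∫ t in A'ᶜ, E t ∂μ
        = ∫ t in A'ᶜ, ε * E t ∂μ := (integral_const_mul ..).symm
      _ ≤ ∫ t in A'ᶜ, f t * E t ∂μ := by
        refine setIntegral_mono_on_ae (hEint.const_mul ε).integrableOn hfE.integrableOn
          hA'meas.compl ?_
        filter_upwards [hfA] with t ht htA'
        exact mul_le_mul_of_nonneg_right (ht fun h => htA' (subset_toMeasurable μ A h)) (hE t)
      _ ≤ ∫ t, f t * E t ∂μ :=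
        setIntegral_le_integral hfE (.of_forall fun t => mul_nonneg (hf t) (hE t))
  rw [← integral_add_compl hA'meas hEint]
  linarith [mul_le_mul_of_nonneg_left hbad hε]

theorem volume_thickening_image_inter_Ioo_le (x : ℕ → ℝ) (n : ℕ) {η : ℝ} (hη : 0 ≤ η) :
    volume (Metric.thickening η (x '' Iic (n + 1)) ∩ Ioo (x 0) (x (n + 1))) ≤
      ENNReal.ofReal (2 * η * (n + 1)) := by
  have hcover : Metric.thickening η (x '' Iic (n + 1)) ∩ Ioo (x 0) (x (n + 1)) ⊆
      ⋃ k ∈ Finset.range (n + 1), (Icc (x k) (x k + η) ∪ Icc (x (k + 1) - η) (x (k + 1))) := by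
    rintro t ⟨ht, ht₀, htn⟩
    obtain ⟨_, ⟨j, hj, rfl⟩, htj⟩ := Metric.mem_thickening_iff.1 ht
    obtain ⟨hlo, hhi⟩ := abs_lt.1 htj
    simp only [mem_iUnion, Finset.mem_range, exists_prop, mem_union, mem_Icc]
    rcases le_or_gt (x j) t with hjt | hjt
    · exact ⟨j, (mem_Iic.1 hj).lt_of_ne fun h => (h ▸ htn).not_ge hjt, .inl ⟨hjt, by linarith⟩⟩
    · obtain ⟨k, rfl⟩ := Nat.exists_eq_succ_of_ne_zero fun h : j = 0 => (h ▸ ht₀).not_gt hjt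
      exact ⟨k, hj, .inr ⟨by linarith, hjt.le⟩⟩
  calc volume (Metric.thickening η (x '' Iic (n + 1)) ∩ Ioo (x 0) (x (n + 1)))
      ≤ ∑ k ∈ Finset.range (n + 1),
          volume (Icc (x k) (x k + η) ∪ Icc (x (k + 1) - η) (x (k + 1))) :=
        (measure_mono hcover).trans (measure_biUnion_finset_le _ _)
    _ ≤ ∑ _k ∈ Finset.range (n + 1), ENNReal.ofReal (2 * η) := by
        refine Finset.sum_le_sum fun k _ => (measure_union_le _ _).trans_eq ?_
        rw [Real.volume_Icc, Real.volume_Icc, add_sub_cancel_left, sub_sub_cancel,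
          ← ENNReal.ofReal_add hη hη, two_mul]
    _ = ENNReal.ofReal (2 * η * (n + 1)) := by
        rw [Finset.sum_const, Finset.card_range, ← ENNReal.ofReal_nsmul, nsmul_eq_mul,
          mul_comm, Nat.cast_add_one]

/-- The points `x 0, …, x (n + 1)` cut `[a, b]` into `n + 1` consecutive, possibly degenerate,
intervals on each of which `w` does not change sign, so that all turning points of `w` in `(a, b)`
are among `x 1, …, x n`. -/
structure IsSignPartition (w : ℝ → ℝ) (a b : ℝ) (n : ℕ) (x : ℕ → ℝ) : Prop where
  zero : x 0 = a
  last : x (n + 1) = b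
  le_succ : ∀ k ≤ n, x k ≤ x (k + 1)
  sign : ∀ k ≤ n, 0 ≤ᵐ[volume.restrict (Ioo (x k) (x (k + 1)))] w ∨
    w ≤ᵐ[volume.restrict (Ioo (x k) (x (k + 1)))] 0

namespace IsSignPartition

variable {w : ℝ → ℝ} {a b : ℝ} {n : ℕ} {x : ℕ → ℝ}

theorem of_alternating_sign (hzero : x 0 = a) (hlast : x (n + 1) = b)
    (hle : ∀ k ≤ n, x k ≤ x (k + 1)) {s : ℝ}
    (hs : ∀ k ≤ n, ∀ᵐ t ∂volume.restrict (Ioo (x k) (x (k + 1))), 0 < s * (-1) ^ k * w t) :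
    IsSignPartition w a b n x where
  zero := hzero
  last := hlast
  le_succ := hle
  sign k hk := (le_total 0 (s * (-1) ^ k)).imp
    (fun hc => (hs k hk).mono fun _ ht => (pos_of_mul_pos_right ht hc).le)
    fun hc => (hs k hk).mono fun _ ht => (neg_of_mul_pos_right ht hc).le

theorem monotoneOn (hx : IsSignPartition w a b n x) : MonotoneOn x (Iic (n + 1)) := by
  refine monotoneOn_of_le_add_one ordConnected_Iic fun k _ _ hk => hx.le_succ k ?_
  exact Nat.le_of_succ_le_succ hk

theorem mem_Icc (hx : IsSignPartition w a b n x) {k : ℕ} (hk : k ≤ n + 1) : x k ∈ Icc a b :=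
  ⟨hx.zero ▸ hx.monotoneOn (Nat.zero_le _) hk (Nat.zero_le _),
    hx.last ▸ hx.monotoneOn hk self_mem_Iic hk⟩

theorem le (hx : IsSignPartition w a b n x) : a ≤ b :=
  nonempty_Icc.1 ⟨_, hx.mem_Icc (Nat.zero_le _)⟩

theorem uIcc_subset (hx : IsSignPartition w a b n x) {k : ℕ} (hk : k ≤ n) :
    uIcc (x k) (x (k + 1)) ⊆ uIcc a b := by
  rw [uIcc_of_le hx.le]
  exact uIcc_subset_Icc (hx.mem_Icc (by lia)) (hx.mem_Icc (by lia))

theorem sum_integral (hx : IsSignPartition w a b n x) {f : ℝ → ℝ}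
    (hf : IntervalIntegrable f volume a b) :
    ∑ k ∈ Finset.range (n + 1), ∫ t in x k..x (k + 1), f t = ∫ t in a..b, f t := by
  rw [intervalIntegral.sum_integral_adjacent_intervals, hx.zero, hx.last]
  exact fun k hk => hf.mono_set (hx.uIcc_subset (by lia))

theorem integral_abs_mul_eq_abs_integral_mul (hx : IsSignPartition w a b n x) {f : ℝ → ℝ}
    (hf : 0 ≤ f) {k : ℕ} (hk : k ≤ n) :
    ∫ t in x k..x (k + 1), |w t| * f t = |∫ t in x k..x (k + 1), w t * f t| := by
  have habs : ∀ t, |w t| * f t = |w t * f t| := fun t => by rw [abs_mul, abs_of_nonneg (hf t)]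
  simp only [habs, intervalIntegral.integral_of_le (hx.le_succ k hk), integral_Ioc_eq_integral_Ioo]
  refine integral_abs_eq_abs_integral ((hx.sign k hk).imp (fun h => ?_) fun h => ?_)
  · exact h.mono fun t ht => mul_nonneg ht (hf t)
  · exact h.mono fun t ht => mul_nonpos_of_nonpos_of_nonneg ht (hf t)

variable {E H T g g' : ℝ → ℝ} {m : ℝ}

theorem abs_mul_integral_piece_le (hx : IsSignPartition w a b n x)
    (hT : IsPrimitiveOn T (fun t => H t - m * (w t * E t)) a b) (hg : IsPrimitiveOn g g' a b)
    (hwEg : IntervalIntegrable (fun t => w t * (E t * g t)) volume a b)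
    (hbound : IntervalIntegrable (fun t => |g' t| * |T t| + g t * |H t|) volume a b)
    (hE : 0 ≤ E) (hg₀ : 0 ≤ g) (hgx : ∀ k ≤ n + 1, g (x k) = 0) {k : ℕ} (hk : k ≤ n) :
    |m| * ∫ t in x k..x (k + 1), |w t| * (E t * g t) ≤
      ∫ t in x k..x (k + 1), (|g' t| * |T t| + g t * |H t|) := by
  have hsub := hx.uIcc_subset hk
  have hgT := (hg.mono hsub).smul (hT.mono hsub)
  have hparts : ∫ t in x k..x (k + 1), (g t • (H t - m * (w t * E t)) + g' t • T t) = 0 := by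
    simpa [hgx k (by lia), hgx (k + 1) (by lia)] using hgT.integral_eq_sub
  have hidentity : m * ∫ t in x k..x (k + 1), w t * (E t * g t) =
      ∫ t in x k..x (k + 1), (g' t * T t + g t * H t) := by
    rw [← intervalIntegral.integral_const_mul, ← add_zero (∫ t in _.._, m * _), ← hparts,
      ← intervalIntegral.integral_add ((hwEg.mono_set hsub).const_mul m) hgT.intervalIntegrable]
    exact intervalIntegral.integral_congr fun t _ => by simp only [smul_eq_mul]; ring
  rw [hx.integral_abs_mul_eq_abs_integral_mul (fun t => mul_nonneg (hE t) (hg₀ t)) hk, ← abs_mul,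
    hidentity, ← Real.norm_eq_abs]
  refine intervalIntegral.norm_integral_le_of_norm_le (hx.le_succ k hk) (.of_forall fun t _ => ?_)
    (hbound.mono_set hsub)
  calc |g' t * T t + g t * H t|
      ≤ |g' t * T t| + |g t * H t| := abs_add_le _ _
    _ = |g' t| * |T t| + g t * |H t| := by rw [abs_mul, abs_mul, abs_of_nonneg (hg₀ t)]

theorem abs_mul_integral_le (hx : IsSignPartition w a b n x)
    (hwE : IntervalIntegrable (fun t => w t * E t) volume a b)
    (hT : IsPrimitiveOn T (fun t => H t - m * (w t * E t)) a b) (hg : IsPrimitiveOn g g' a b)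
    (hE : 0 ≤ E) (hg₀ : 0 ≤ g) (hgx : ∀ k ≤ n + 1, g (x k) = 0) :
    |m| * ∫ t in a..b, |w t| * (E t * g t) ≤ ∫ t in a..b, (|g' t| * |T t| + g t * |H t|) := by
  have hH : IntervalIntegrable H volume a b := by
    simpa using hT.intervalIntegrable.add (hwE.const_mul m)
  have hbound : IntervalIntegrable (fun t => |g' t| * |T t| + g t * |H t|) volume a b :=
    (hg.intervalIntegrable.abs.mul_continuousOn hT.absolutelyContinuous.continuousOn.abs).add
      (hH.abs.continuousOn_mul hg.absolutelyContinuous.continuousOn)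
  have hwEg : IntervalIntegrable (fun t => w t * (E t * g t)) volume a b := by
    simpa only [mul_assoc] using hwE.mul_continuousOn hg.absolutelyContinuous.continuousOn
  have hwEg' : IntervalIntegrable (fun t => |w t| * (E t * g t)) volume a b :=
    hwEg.abs.congr fun t _ => by
      rw [abs_mul, abs_of_nonneg (mul_nonneg (hE t) (hg₀ t))]
  rw [← hx.sum_integral hwEg', ← hx.sum_integral hbound, Finset.mul_sum]
  exact Finset.sum_le_sum fun k hk => hx.abs_mul_integral_piece_le hT hg hwEg hbound hE hg₀ hgx
    (Nat.lt_succ_iff.1 (Finset.mem_range.1 hk))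

end IsSignPartition

section Estimate

open Metric

variable {a b B : ℝ} {p v : ℝ → ℝ}

theorem memLp_two_of_continuousOn_Icc (hp : ContinuousOn p (Icc a b)) :
    MemLp p 2 (volume.restrict (Icc a b)) :=
  (memLp_two_iff_integrable_sq (hp.aestronglyMeasurable measurableSet_Icc)).2
    (hp.pow 2).integrableOn_Icc

theorem integral_abs_deriv_cutoff_mul_le {η ρ : ℝ} (hη : 0 < η) {X : Set ℝ} (hab : a ≤ b)
    (hp : ContinuousOn p (Icc a b)) (hv : ContinuousOn v (Icc a b)) (hp₀ : 0 ≤ p) (hv₀ : 0 ≤ v)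
    (hpB : ∀ t ∈ Icc a b, p t ^ 2 ≤ B) (hρ : 0 ≤ ρ)
    (hX : volume (thickening η X ∩ Ioo a b) ≤ ENNReal.ofReal ρ) :
    ∫ t in a..b, |deriv (cutoff hη X) t| * (p t * v t) ≤
      η⁻¹ * (√(B * ρ) * √(∫ t in a..b, v t ^ 2)) := by
  set S := thickening η X ∩ Ioo a b
  have hSI : S ⊆ Icc a b := inter_subset_right.trans Ioo_subset_Icc_self
  have hL2 {f : ℝ → ℝ} (hf : ContinuousOn f (Icc a b)) : MemLp f 2 (volume.restrict S) :=
    (memLp_two_of_continuousOn_Icc hf).mono_measure (Measure.restrict_mono hSI le_rfl)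
  have hpv : ContinuousOn (fun t => η⁻¹ * (p t * v t)) (Icc a b) := (hp.mul hv).const_mul η⁻¹
  have hB : 0 ≤ B := (sq_nonneg _).trans (hpB a (left_mem_Icc.2 hab))
  calc ∫ t in a..b, |deriv (cutoff hη X) t| * (p t * v t)
      = ∫ t in Ioo a b, |deriv (cutoff hη X) t| * (p t * v t) := by
        rw [intervalIntegral.integral_of_le hab, integral_Ioc_eq_integral_Ioo]
    _ ≤ ∫ t in Ioo a b, (thickening η X).indicator (fun s => η⁻¹ * (p s * v s)) t := by
        refine integral_mono_of_nonneg
          (.of_forall fun t => mul_nonneg (abs_nonneg _) (mul_nonneg (hp₀ t) (hv₀ t)))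
          (((hpv.integrableOn_Icc).mono_set Ioo_subset_Icc_self).indicator
            isOpen_thickening.measurableSet) (.of_forall fun t => ?_)
        rw [indicator_mul_left]
        exact mul_le_mul_of_nonneg_right (abs_deriv_cutoff_le hη X t)
          (mul_nonneg (hp₀ t) (hv₀ t))
    _ = η⁻¹ * ∫ t in S, p t * v t := by
        rw [setIntegral_indicator isOpen_thickening.measurableSet, inter_comm,
          integral_const_mul]
    _ ≤ η⁻¹ * (√(∫ t in S, p t ^ 2) * √(∫ t in S, v t ^ 2)) := by
        gcongr
        exact integral_mul_le_sqrt_mul_sqrt (hL2 hp) (hL2 hv) hp₀ hv₀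
    _ ≤ η⁻¹ * (√(B * ρ) * √(∫ t in a..b, v t ^ 2)) := by
        gcongr
        · calc ∫ t in S, p t ^ 2
              ≤ B * volume.real S := (le_abs_self _).trans <|
                norm_setIntegral_le_of_norm_le_const (hX.trans_lt ENNReal.ofReal_lt_top)
                  fun t ht => (Real.norm_of_nonneg (sq_nonneg _)).trans_le (hpB t (hSI ht))
            _ ≤ B * ρ := by gcongr; exact ENNReal.toReal_le_of_le_ofReal hρ hX
        · rw [intervalIntegral.integral_of_le hab, integral_Ioc_eq_integral_Ioo]
          exact setIntegral_mono_set
            (((hv.pow 2).integrableOn_Icc).mono_set Ioo_subset_Icc_self)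
            (.of_forall fun t => sq_nonneg _) inter_subset_right.eventuallyLE

namespace IsSignPartition

variable {w : ℝ → ℝ} {n : ℕ} {x : ℕ → ℝ} {ε η θ : ℝ}

theorem mul_integral_sub_le_integral_cutoff (hx : IsSignPartition w a b n x)
    (hw : IntervalIntegrable w volume a b) (hp : ContinuousOn p (Icc a b))
    (hpB : ∀ t ∈ Icc a b, p t ^ 2 ≤ B) (hε : 0 ≤ ε) (hθ : 0 ≤ θ)
    (hsmall : volume {t | t ∈ Ioo a b ∧ |w t| < ε} ≤ ENNReal.ofReal θ) (hη : 0 < η) :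
    ε * ((∫ t in a..b, p t ^ 2) - B * (θ + 2 * η * (n + 1))) ≤
      ∫ t in a..b, |w t| * (p t ^ 2 * cutoff hη (x '' Iic (n + 1)) t) := by
  set X := x '' Iic (n + 1)
  have hint {f : ℝ → ℝ} : ∫ t in a..b, f t = ∫ t in Ioo a b, f t := by
    rw [intervalIntegral.integral_of_le hx.le, integral_Ioc_eq_integral_Ioo]
  have hmem : ∀ᵐ t ∂volume.restrict (Ioo a b), t ∈ Ioo a b := ae_restrict_mem measurableSet_Ioo
  have hp2 : ContinuousOn (fun t => p t ^ 2) (Icc a b) := hp.pow 2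
  have hbad : volume.restrict (Ioo a b) ({t | |w t| < ε} ∪ thickening η X) ≤
      ENNReal.ofReal (θ + 2 * η * (n + 1)) := by
    rw [ENNReal.ofReal_add hθ (by positivity)]
    refine (measure_union_le _ _).trans (add_le_add ?_ ?_)
    · rwa [Measure.restrict_apply' measurableSet_Ioo, inter_comm]
    · rw [Measure.restrict_apply' measurableSet_Ioo]
      simpa only [hx.zero, hx.last] using volume_thickening_image_inter_Ioo_le x n hη.le
  have hwg : IntegrableOn (fun t => |w t| * cutoff hη X t * p t ^ 2) (Ioo a b) := by
    have hg := (isPrimitiveOn_cutoff hη X a b).absolutelyContinuous.continuousOn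
    rw [← uIcc_of_le hx.le] at hp2
    exact ((intervalIntegrable_iff_integrableOn_Ioo_of_le hx.le).1
      ((hw.abs.mul_continuousOn hg).mul_continuousOn hp2))
  have hmain := mul_integral_sub_le_integral_mul hε (by positivity) hbad
    (f := fun t => |w t| * cutoff hη X t) (E := fun t => p t ^ 2)
    (fun t => mul_nonneg (abs_nonneg _) (cutoff_nonneg hη X t))
    (.of_forall fun t ht => by
      obtain ⟨htw, htX⟩ := not_or.1 ht
      rwa [cutoff_eq_one hη htX, mul_one, ← not_lt])
    ((sq_nonneg _).trans (hpB a (left_mem_Icc.2 hx.le))) (fun t => sq_nonneg _)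
    (hmem.mono fun t ht => hpB t (Ioo_subset_Icc_self ht))
    (hp2.integrableOn_Icc.mono_set Ioo_subset_Icc_self) hwg
  rw [hint, hint]
  exact hmain.trans_eq (integral_congr_ae (.of_forall fun t => by ring))

theorem abs_mul_le (hx : IsSignPartition w a b n x) (hw : IntervalIntegrable w volume a b)
    (hp : ContinuousOn p (Icc a b)) (hv : ContinuousOn v (Icc a b)) (hp₀ : 0 ≤ p) (hv₀ : 0 ≤ v)
    (hpB : ∀ t ∈ Icc a b, p t ^ 2 ≤ B) {T H : ℝ → ℝ} {m : ℝ}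
    (hT : IsPrimitiveOn T (fun t => H t - m * (w t * p t ^ 2)) a b)
    (hTpv : ∀ t, |T t| ≤ p t * v t) (hε : 0 ≤ ε) (hθ : 0 ≤ θ)
    (hsmall : volume {t | t ∈ Ioo a b ∧ |w t| < ε} ≤ ENNReal.ofReal θ) (hη : 0 < η) :
    |m| * (ε * ((∫ t in a..b, p t ^ 2) - B * (θ + 2 * η * (n + 1)))) ≤
      η⁻¹ * (√(B * (2 * η * (n + 1))) * √(∫ t in a..b, v t ^ 2)) + ∫ t in a..b, |H t| := by
  set X := x '' Iic (n + 1)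
  have hwp : IntervalIntegrable (fun t => w t * p t ^ 2) volume a b :=
    hw.mul_continuousOn (by rw [uIcc_of_le hx.le]; exact hp.pow 2)
  have hH : IntervalIntegrable H volume a b := by
    simpa using hT.intervalIntegrable.add (hwp.const_mul m)
  have hg := isPrimitiveOn_cutoff hη X a b
  have hgT := hg.intervalIntegrable.abs.mul_continuousOn hT.absolutelyContinuous.continuousOn.abs
  have hgpv : IntervalIntegrable (fun t => |deriv (cutoff hη X) t| * (p t * v t)) volume a b :=
    hg.intervalIntegrable.abs.mul_continuousOn (by rw [uIcc_of_le hx.le]; exact hp.mul hv)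
  calc |m| * (ε * ((∫ t in a..b, p t ^ 2) - B * (θ + 2 * η * (n + 1))))
      ≤ |m| * ∫ t in a..b, |w t| * (p t ^ 2 * cutoff hη X t) := by
        gcongr
        exact hx.mul_integral_sub_le_integral_cutoff hw hp hpB hε hθ hsmall hη
    _ ≤ ∫ t in a..b, (|deriv (cutoff hη X) t| * |T t| + cutoff hη X t * |H t|) :=
        hx.abs_mul_integral_le hwp hT hg (fun t => sq_nonneg _) (cutoff_nonneg hη X)
          fun k hk => cutoff_eq_zero hη (mem_image_of_mem x hk)
    _ ≤ ∫ t in a..b, (|deriv (cutoff hη X) t| * (p t * v t) + |H t|) :=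
        intervalIntegral.integral_mono_on hx.le
          (hgT.add (hH.abs.continuousOn_mul hg.absolutelyContinuous.continuousOn))
          (hgpv.add hH.abs) fun t _ => add_le_add
            (mul_le_mul_of_nonneg_left (hTpv t) (abs_nonneg _))
            (mul_le_of_le_one_left (abs_nonneg _) (cutoff_le_one hη X t))
    _ = (∫ t in a..b, |deriv (cutoff hη X) t| * (p t * v t)) + ∫ t in a..b, |H t| :=
        intervalIntegral.integral_add hgpv hH.abs
    _ ≤ η⁻¹ * (√(B * (2 * η * (n + 1))) * √(∫ t in a..b, v t ^ 2)) + ∫ t in a..b, |H t| := by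
        gcongr
        refine integral_abs_deriv_cutoff_mul_le hη hx.le hp hv hp₀ hv₀ hpB (by positivity) ?_
        simpa only [hx.zero, hx.last] using volume_thickening_image_inter_Ioo_le x n hη.le

theorem abs_le_of_energy_le (hx : IsSignPartition w a b n x) (hw : IntervalIntegrable w volume a b)
    (hp : ContinuousOn p (Icc a b)) (hv : ContinuousOn v (Icc a b)) (hp₀ : 0 ≤ p) (hv₀ : 0 ≤ v)
    {T H : ℝ → ℝ} {m : ℝ} (hT : IsPrimitiveOn T (fun t => H t - m * (w t * p t ^ 2)) a b)
    (hTpv : ∀ t, |T t| ≤ p t * v t) {α δ κ : ℝ} (hα : 0 < α) (hδ : 0 < δ)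
    (hB : B = α * δ ^ 2 * ∫ t in a..b, p t ^ 2) (hB₀ : 0 < B) (hpB : ∀ t ∈ Icc a b, p t ^ 2 ≤ B)
    (hvB : ∫ t in a..b, v t ^ 2 ≤ α * B) (hHB : ∫ t in a..b, |H t| ≤ κ * B) (hε : 0 < ε)
    (hsmall : volume {t | t ∈ Ioo a b ∧ |w t| < ε} ≤ ENNReal.ofReal (1 / (4 * α * δ ^ 2))) :
    |m| ≤ 2 / ε * α * δ ^ 2 * (4 * α * δ * (n + 1) + κ) := by
  set N := ∫ t in a..b, p t ^ 2
  -- The transition layers then take up as much room as the set `|w| < ε` is allowed to.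
  set η := 1 / (8 * α * δ ^ 2 * (n + 1)) with hη
  have hbad : N - B * (1 / (4 * α * δ ^ 2) + 2 * η * (n + 1)) = N / 2 := by
    rw [hB, hη]; field_simp; ring
  have hlayer : B * (2 * η * (n + 1)) = B / (4 * α * δ ^ 2) := by rw [hη]; field_simp; ring
  have hsqrt : √(B / (4 * α * δ ^ 2)) * √(α * B) = B / (2 * δ) := by
    rw [← Real.sqrt_mul (by positivity), Real.sqrt_eq_iff_mul_self_eq_of_pos (by positivity)]
    field_simp
    norm_num
  have hkey : |m| * (ε * (N / 2)) ≤ (4 * α * δ * (n + 1) + κ) * B := by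
    calc |m| * (ε * (N / 2))
        ≤ η⁻¹ * (√(B * (2 * η * (n + 1))) * √(∫ t in a..b, v t ^ 2)) +
            ∫ t in a..b, |H t| := hbad ▸ hx.abs_mul_le hw hp hv hp₀ hv₀ hpB hT hTpv hε.le
              (by positivity) hsmall (by positivity)
      _ ≤ η⁻¹ * (√(B * (2 * η * (n + 1))) * √(α * B)) + κ * B := by gcongr
      _ = (4 * α * δ * (n + 1) + κ) * B := by rw [hlayer, hsqrt, hη]; field_simp; ring
  have hN : 0 < N := pos_of_mul_pos_right (hB ▸ hB₀) (by positivity)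
  have hfactor : (4 * α * δ * (n + 1) + κ) * B =
      2 / ε * α * δ ^ 2 * (4 * α * δ * (n + 1) + κ) * (ε * (N / 2)) := by
    rw [hB]; field_simp
  exact le_of_mul_le_mul_right (hkey.trans_eq hfactor) (by positivity)

end IsSignPartition

end Estimate

theorem IsPrimitiveOn.abs_mul_abs_integral_le {E e w : ℝ → ℝ} {a b : ℝ} (hab : a ≤ b)
    (hE : IsPrimitiveOn E e a b) (hw : IntervalIntegrable w volume a b)
    (hwE : ∫ t in a..b, w t * E t = 0) {y : ℝ} (hy : y ∈ Icc a b) :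
    |E y| * |∫ t in a..b, w t| ≤ (∫ t in a..b, |w t|) * ∫ t in a..b, |e t| := by
  have hosc : ∀ t ∈ Icc a b, |E y - E t| ≤ ∫ s in a..b, |e s| := by
    intro t ht
    have hsub : uIcc t y ⊆ uIcc a b := by rw [uIcc_of_le hab]; exact uIcc_subset_Icc ht hy
    rw [← (hE.mono hsub).integral_eq_sub, ← Real.norm_eq_abs]
    refine intervalIntegral.norm_integral_le_abs_integral_norm.trans ?_
    refine (intervalIntegral.abs_integral_mono_interval (uIoc_subset_uIoc_of_uIcc_subset_uIcc hsub)
      (.of_forall fun s => norm_nonneg (e s)) hE.intervalIntegrable.norm).trans_eq ?_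
    exact abs_of_nonneg (intervalIntegral.integral_nonneg hab fun s _ => norm_nonneg _)
  have hwE' : IntervalIntegrable (fun t => w t * E t) volume a b :=
    hw.mul_continuousOn hE.absolutelyContinuous.continuousOn
  have hmean : E y * ∫ t in a..b, w t = ∫ t in a..b, w t * (E y - E t) := by
    simp only [mul_sub]
    rw [intervalIntegral.integral_sub (hw.mul_const _) hwE', hwE, sub_zero,
      intervalIntegral.integral_mul_const, mul_comm]
  rw [← abs_mul, hmean, ← intervalIntegral.integral_mul_const, ← Real.norm_eq_abs]
  refine intervalIntegral.norm_integral_le_of_norm_le hab (.of_forall fun t ht => ?_)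
    (hw.abs.mul_const _)
  rw [norm_mul]
  exact mul_le_mul_of_nonneg_left (hosc t (Ioc_subset_Icc_self ht)) (abs_nonneg _)

/-- `φ` solves `-φ'' + q φ = lam w φ` on `[a, b]` with quasi-derivative `φ' = u`, in integrated
form. -/
structure IsSolution (q w : ℝ → ℝ) (lam : ℂ) (a b : ℝ) (φ u : ℝ → ℂ) : Prop where
  continuousOn : ContinuousOn φ (Icc a b)
  continuousOn_deriv : ContinuousOn u (Icc a b)
  eq_add_integral : ∀ y ∈ Icc a b, φ y = φ a + ∫ t in a..y, u t
  deriv_eq_add_integral : ∀ y ∈ Icc a b,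
    u y = u a + ∫ t in a..y, ((q t : ℂ) - lam * (w t : ℂ)) * φ t

namespace IsSolution

variable {q w : ℝ → ℝ} {lam : ℂ} {a b : ℝ} {φ u : ℝ → ℂ}

theorem isPrimitiveOn (h : IsSolution q w lam a b φ u) (hab : a ≤ b) : IsPrimitiveOn φ u a b :=
  .of_eq_integral hab (h.continuousOn_deriv.intervalIntegrable_of_Icc hab) h.eq_add_integral

theorem isPrimitiveOn_conj (h : IsSolution q w lam a b φ u) (hab : a ≤ b) :
    IsPrimitiveOn (fun t => conj (φ t)) (fun t => conj (u t)) a b :=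
  (h.isPrimitiveOn hab).continuousLinearMap_comp conjCLE.toContinuousLinearMap

theorem isPrimitiveOn_norm_sq (h : IsSolution q w lam a b φ u) (hab : a ≤ b) :
    IsPrimitiveOn (fun t => ‖φ t‖ ^ 2) (fun t => 2 * (conj (φ t) * u t).re) a b := by
  refine (((h.isPrimitiveOn_conj hab).smul (h.isPrimitiveOn hab)).continuousLinearMap_comp
    reCLM).congr (fun t => ?_) fun t => ?_
  · rw [smul_eq_mul, conj_mul', reCLM_apply]
    norm_cast
  · simp only [smul_eq_mul, reCLM_apply, add_re, mul_re, conj_re, conj_im, neg_mul,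
      sub_neg_eq_add]
    ring

theorem continuousOn_norm_sq (h : IsSolution q w lam a b φ u) (hab : a ≤ b) :
    ContinuousOn (fun t => ‖φ t‖ ^ 2) (uIcc a b) := by
  rw [uIcc_of_le hab]
  exact h.continuousOn.norm.pow 2

theorem intervalIntegrable_norm_sq_deriv (h : IsSolution q w lam a b φ u) (hab : a ≤ b) :
    IntervalIntegrable (fun t => ‖u t‖ ^ 2) volume a b :=
  (h.continuousOn_deriv.norm.pow 2).intervalIntegrable_of_Icc hab

theorem integral_abs_re_conj_mul_le (h : IsSolution q w lam a b φ u) (hab : a ≤ b) :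
    ∫ t in a..b, |(conj (φ t) * u t).re| ≤
      √(∫ t in a..b, ‖φ t‖ ^ 2) * √(∫ t in a..b, ‖u t‖ ^ 2) := by
  simp only [intervalIntegral.integral_of_le hab, ← integral_Icc_eq_integral_Ioc]
  refine le_trans ?_ (integral_mul_le_sqrt_mul_sqrt (memLp_two_of_continuousOn_Icc
    h.continuousOn.norm) (memLp_two_of_continuousOn_Icc h.continuousOn_deriv.norm)
    (fun _ => norm_nonneg _) fun _ => norm_nonneg _)
  refine integral_mono_of_nonneg (.of_forall fun t => abs_nonneg _)
    (h.continuousOn.norm.mul h.continuousOn_deriv.norm).integrableOn_Icc (.of_forall fun t => ?_)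
  simpa using abs_re_le_norm (conj (φ t) * u t)

variable (hq : IntervalIntegrable q volume a b)
include hq

theorem integral_abs_energy_le (h : IsSolution q w lam a b φ u) (hab : a ≤ b) {M : ℝ}
    (hM : ∀ t ∈ Icc a b, ‖φ t‖ ^ 2 ≤ M) :
    ∫ t in a..b, |‖u t‖ ^ 2 + q t * ‖φ t‖ ^ 2| ≤
      (∫ t in a..b, ‖u t‖ ^ 2) + (∫ t in a..b, |q t|) * M := by
  have hu2 := h.intervalIntegrable_norm_sq_deriv hab
  rw [← intervalIntegral.integral_mul_const, ← intervalIntegral.integral_add hu2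
    (hq.abs.mul_const M)]
  refine (Real.le_norm_self _).trans (intervalIntegral.norm_integral_le_of_norm_le hab
    (.of_forall fun t ht => ?_) (hu2.add (hq.abs.mul_const M)))
  rw [Real.norm_of_nonneg (abs_nonneg _)]
  calc |‖u t‖ ^ 2 + q t * ‖φ t‖ ^ 2| ≤ |‖u t‖ ^ 2| + |q t * ‖φ t‖ ^ 2| := abs_add_le _ _
    _ = ‖u t‖ ^ 2 + |q t| * ‖φ t‖ ^ 2 := by rw [abs_mul, abs_sq, abs_sq]
    _ ≤ ‖u t‖ ^ 2 + |q t| * M := by gcongr; exact hM t (Ioc_subset_Icc_self ht)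

variable (hw : IntervalIntegrable w volume a b)
include hw

theorem isPrimitiveOn_conj_mul (h : IsSolution q w lam a b φ u) (hab : a ≤ b) :
    IsPrimitiveOn (fun t => conj (φ t) * u t)
      (fun t => ((‖u t‖ ^ 2 : ℝ) : ℂ) + ((q t : ℂ) - lam * w t) * ((‖φ t‖ ^ 2 : ℝ) : ℂ)) a b := by
  have hφ : ContinuousOn φ (uIcc a b) := by rw [uIcc_of_le hab]; exact h.continuousOn
  have hint : IntervalIntegrable (fun t => ((q t : ℂ) - lam * w t) * φ t) volume a b := by
    simpa only [sub_mul, mul_assoc, real_smul] using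
      (hq.smul_continuousOn hφ).sub ((hw.smul_continuousOn hφ).const_mul lam)
  refine ((h.isPrimitiveOn_conj hab).smul (.of_eq_integral hab hint h.deriv_eq_add_integral)).congr
    (fun t => rfl) fun t => ?_
  simp only [smul_eq_mul, ofReal_pow, ← conj_mul']
  ring

theorem isPrimitiveOn_re (h : IsSolution q w lam a b φ u) (hab : a ≤ b) :
    IsPrimitiveOn (fun t => (conj (φ t) * u t).re)
      (fun t => ‖u t‖ ^ 2 + q t * ‖φ t‖ ^ 2 - lam.re * (w t * ‖φ t‖ ^ 2)) a b :=
  ((h.isPrimitiveOn_conj_mul hq hw hab).continuousLinearMap_comp reCLM).congr (fun _ => rfl)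
    fun t => by
      rw [reCLM_apply, add_re, ofReal_re, re_mul_ofReal, sub_re, ofReal_re, re_mul_ofReal]
      ring

theorem isPrimitiveOn_im (h : IsSolution q w lam a b φ u) (hab : a ≤ b) :
    IsPrimitiveOn (fun t => (conj (φ t) * u t).im)
      (fun t => 0 - lam.im * (w t * ‖φ t‖ ^ 2)) a b :=
  ((h.isPrimitiveOn_conj_mul hq hw hab).continuousLinearMap_comp imCLM).congr (fun _ => rfl)
    fun t => by
      rw [imCLM_apply, add_im, ofReal_im, im_mul_ofReal, sub_im, ofReal_im, im_mul_ofReal]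
      ring

variable {l r α δ : ℝ}

theorem integral_weight_mul_norm_sq_eq_zero (h : IsSolution q w lam a b φ u) (hab : a ≤ b)
    (hl : u a = l * φ a) (hr : u b = r * φ b) (hlam : lam.im ≠ 0) :
    ∫ t in a..b, w t * ‖φ t‖ ^ 2 = 0 := by
  have hzero : ∀ (c : ℝ) (z : ℂ), (conj z * (c * z)).im = 0 := fun c z => by
    rw [mul_left_comm, conj_mul']; norm_cast
  have hbalance := (h.isPrimitiveOn_im hq hw hab).integral_eq_sub
  simp only [hl, hr, hzero, zero_sub, intervalIntegral.integral_neg,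
    intervalIntegral.integral_const_mul, sub_zero, neg_eq_zero] at hbalance
  exact (mul_eq_zero.1 hbalance).resolve_left hlam

theorem integral_norm_sq_deriv_eq (h : IsSolution q w lam a b φ u) (hab : a ≤ b)
    (hl : u a = l * φ a) (hr : u b = r * φ b) (hlam : lam.im ≠ 0) :
    ∫ t in a..b, ‖u t‖ ^ 2 =
      r * ‖φ b‖ ^ 2 - l * ‖φ a‖ ^ 2 - ∫ t in a..b, q t * ‖φ t‖ ^ 2 := by
  have hre : ∀ (c : ℝ) (z : ℂ), (conj z * (c * z)).re = c * ‖z‖ ^ 2 := fun c z => by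
    rw [mul_left_comm, conj_mul']; norm_cast
  have hφ2 := h.continuousOn_norm_sq hab
  have hu2 := h.intervalIntegrable_norm_sq_deriv hab
  have hbalance := (h.isPrimitiveOn_re hq hw hab).integral_eq_sub
  rw [intervalIntegral.integral_sub (hu2.add (hq.mul_continuousOn hφ2))
      ((hw.mul_continuousOn hφ2).const_mul _),
    intervalIntegral.integral_add hu2 (hq.mul_continuousOn hφ2),
    intervalIntegral.integral_const_mul,
    h.integral_weight_mul_norm_sq_eq_zero hq hw hab hl hr hlam, hl, hr, hre, hre] at hbalance
  linarith

theorem integral_norm_sq_deriv_le (h : IsSolution q w lam a b φ u) (hab : a ≤ b)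
    (hl : u a = l * φ a) (hr : u b = r * φ b) (hlam : lam.im ≠ 0) {M : ℝ}
    (hM : ∀ t ∈ Icc a b, ‖φ t‖ ^ 2 ≤ M) :
    ∫ t in a..b, ‖u t‖ ^ 2 ≤ (|l| + |r| + ∫ t in a..b, |min (q t) 0|) * M := by
  have hqneg : IntervalIntegrable (fun t => |min (q t) 0|) volume a b :=
    ⟨(hq.1.inf (integrable_zero ..)).abs, (hq.2.inf (integrable_zero ..)).abs⟩
  have hpotential : -∫ t in a..b, q t * ‖φ t‖ ^ 2 ≤ (∫ t in a..b, |min (q t) 0|) * M := by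
    rw [← intervalIntegral.integral_neg, ← intervalIntegral.integral_mul_const]
    refine intervalIntegral.integral_mono_on hab
      (hq.mul_continuousOn (h.continuousOn_norm_sq hab)).neg (hqneg.mul_const M) fun t ht => ?_
    calc -(q t * ‖φ t‖ ^ 2) = -q t * ‖φ t‖ ^ 2 := (neg_mul ..).symm
      _ ≤ |min (q t) 0| * ‖φ t‖ ^ 2 := by
        gcongr
        exact (neg_le_neg (min_le_left _ _)).trans (neg_le_abs _)
      _ ≤ |min (q t) 0| * M := by gcongr; exact hM t ht
  have ha : -l * ‖φ a‖ ^ 2 ≤ |l| * M := mul_le_mul (neg_le_abs l) (hM a (left_mem_Icc.2 hab))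
    (sq_nonneg _) (abs_nonneg l)
  have hb : r * ‖φ b‖ ^ 2 ≤ |r| * M := mul_le_mul (le_abs_self r) (hM b (right_mem_Icc.2 hab))
    (sq_nonneg _) (abs_nonneg r)
  rw [h.integral_norm_sq_deriv_eq hq hw hab hl hr hlam]
  linarith

theorem norm_sq_mul_abs_integral_weight_le (h : IsSolution q w lam a b φ u) (hab : a ≤ b)
    (hl : u a = l * φ a) (hr : u b = r * φ b) (hlam : lam.im ≠ 0) {y : ℝ} (hy : y ∈ Icc a b) :
    ‖φ y‖ ^ 2 * |∫ t in a..b, w t| ≤ (∫ t in a..b, |w t|) *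
      (2 * (√(∫ t in a..b, ‖φ t‖ ^ 2) * √(∫ t in a..b, ‖u t‖ ^ 2))) := by
  have hsup := (h.isPrimitiveOn_norm_sq hab).abs_mul_abs_integral_le hab hw
    (h.integral_weight_mul_norm_sq_eq_zero hq hw hab hl hr hlam) hy
  simp only [abs_mul, abs_two, intervalIntegral.integral_const_mul, abs_sq] at hsup
  have hW := intervalIntegral.integral_nonneg (μ := volume) hab fun t _ => abs_nonneg (w t)
  exact hsup.trans (by gcongr; exact h.integral_abs_re_conj_mul_le hab)

theorem norm_sq_le (h : IsSolution q w lam a b φ u) (hab : a ≤ b)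
    (hl : u a = l * φ a) (hr : u b = r * φ b) (hlam : lam.im ≠ 0) (hw₀ : (∫ t in a..b, w t) ≠ 0)
    (hδ : δ = 2 + 2 * (∫ t in a..b, |w t|) / |∫ t in a..b, w t|)
    (hα : α = |l| + |r| + ∫ t in a..b, |min (q t) 0|) {y : ℝ} (hy : y ∈ Icc a b) :
    ‖φ y‖ ^ 2 ≤ α * δ ^ 2 * ∫ t in a..b, ‖φ t‖ ^ 2 := by
  obtain ⟨z, hz, hmax⟩ := isCompact_Icc.exists_isMaxOn ⟨y, hy⟩ (h.continuousOn.norm.pow 2)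
  set M := ‖φ z‖ ^ 2
  set N := ∫ t in a..b, ‖φ t‖ ^ 2
  set W := ∫ t in a..b, |w t|
  have hM : 0 ≤ M := sq_nonneg _
  have hN : 0 ≤ N := intervalIntegral.integral_nonneg hab fun t _ => sq_nonneg _
  have hW : 0 ≤ W := intervalIntegral.integral_nonneg hab fun t _ => abs_nonneg _
  have hD : ∫ t in a..b, ‖u t‖ ^ 2 ≤ α * M :=
    hα ▸ h.integral_norm_sq_deriv_le hq hw hab hl hr hlam fun t ht => hmax ht
  have hα₀ : 0 ≤ α := by
    have := intervalIntegral.integral_nonneg (μ := volume) hab fun t _ => abs_nonneg (min (q t) 0)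
    rw [hα]
    positivity
  have hw₁ : 0 < |∫ t in a..b, w t| := abs_pos.2 hw₀
  have hMδ : M ≤ δ * (√N * √(α * M)) := by
    have hsup := h.norm_sq_mul_abs_integral_weight_le hq hw hab hl hr hlam hz
    calc M ≤ W * (2 * (√N * √(∫ t in a..b, ‖u t‖ ^ 2))) / |∫ t in a..b, w t| :=
          (le_div_iff₀ hw₁).2 hsup
      _ ≤ W * (2 * (√N * √(α * M))) / |∫ t in a..b, w t| := by gcongr
      _ = 2 * W / |∫ t in a..b, w t| * (√N * √(α * M)) := by ring
      _ ≤ δ * (√N * √(α * M)) := by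
          gcongr
          linarith
  refine (hmax hy).trans (hM.eq_or_lt.elim (fun h₀ => h₀.symm.trans_le (by positivity)) fun h₀ =>
    le_of_mul_le_mul_right ?_ h₀)
  calc M * M ≤ δ * (√N * √(α * M)) * (δ * (√N * √(α * M))) := mul_self_le_mul_self hM hMδ
    _ = δ ^ 2 * √N ^ 2 * √(α * M) ^ 2 := by ring
    _ = α * δ ^ 2 * N * M := by
        rw [Real.sq_sqrt hN, Real.sq_sqrt (mul_nonneg hα₀ hM)]
        ring

end IsSolution

end SturmLiouville

open SturmLiouville ComplexConjugate in
theorem nonreal_eigenvalue_bounds_turning_points_delta_general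
    {a b : ℝ} {q w : ℝ → ℝ} (hq : IntervalIntegrable q volume a b)
    (hw : IntervalIntegrable w volume a b) {n : ℕ} {x : ℕ → ℝ} (hx : IsSignPartition w a b n x)
    (hw₀ : (∫ t in a..b, w t) ≠ 0)
    {δ : ℝ} (hδ : δ = 2 + 2 * (∫ t in a..b, |w t|) / |∫ t in a..b, w t|)
    {l r α : ℝ} (hα : α = |l| + |r| + ∫ t in a..b, |min (q t) 0|) {ε : ℝ} (hε : 0 < ε)
    (hsmall : volume {t | t ∈ Set.Ioo a b ∧ |w t| < ε} ≤ ENNReal.ofReal (1 / (4 * α * δ ^ 2)))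
    {lam : ℂ} (hlam : lam.im ≠ 0) {φ u : ℝ → ℂ} (h : IsSolution q w lam a b φ u)
    (hφ : ∃ y ∈ Set.Icc a b, φ y ≠ 0) (hl : u a = l * φ a) (hr : u b = r * φ b) :
    |lam.im| ≤ 8 / ε * α ^ 2 * δ ^ 3 * (n + 1) ∧
      |lam.re| ≤ 2 / ε * α * δ ^ 2 *
        (4 * α * δ * (n + 1) + α + ∫ t in a..b, |q t|) := by
  have hab := hx.le
  set B := α * δ ^ 2 * ∫ t in a..b, ‖φ t‖ ^ 2 with hB
  have hφB : ∀ t ∈ Set.Icc a b, ‖φ t‖ ^ 2 ≤ B := fun t ht =>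
    h.norm_sq_le hq hw hab hl hr hlam hw₀ hδ hα ht
  have huB : ∫ t in a..b, ‖u t‖ ^ 2 ≤ α * B :=
    hα ▸ h.integral_norm_sq_deriv_le hq hw hab hl hr hlam hφB
  have hB₀ : 0 < B := hφ.elim fun y hy => (pow_pos (norm_pos_iff.2 hy.2) 2).trans_le (hφB y hy.1)
  have hα₀ : 0 < α := by
    rw [hB, mul_assoc] at hB₀
    exact pos_of_mul_pos_left hB₀ (mul_nonneg (sq_nonneg δ)
      (intervalIntegral.integral_nonneg hab fun t _ => sq_nonneg _))
  have hδ₀ : 0 < δ := by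
    have := intervalIntegral.integral_nonneg (μ := volume) hab fun t _ => abs_nonneg (w t)
    rw [hδ]
    positivity
  have hbound {T H : ℝ → ℝ} {m κ : ℝ}
      (hT : IsPrimitiveOn T (fun t => H t - m * (w t * ‖φ t‖ ^ 2)) a b)
      (hTφu : ∀ t, |T t| ≤ ‖φ t‖ * ‖u t‖) (hH : ∫ t in a..b, |H t| ≤ κ * B) :
      |m| ≤ 2 / ε * α * δ ^ 2 * (4 * α * δ * (n + 1) + κ) :=
    hx.abs_le_of_energy_le hw h.continuousOn.norm h.continuousOn_deriv.norm
      (fun _ => norm_nonneg _) (fun _ => norm_nonneg _) hT hTφu hα₀ hδ₀ hB hB₀ hφB huB hH hε hsmall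
  constructor
  · refine (hbound (κ := 0) (h.isPrimitiveOn_im hq hw hab) (fun t => ?_) (by simp)).trans_eq
      (by ring)
    simpa using abs_im_le_norm (conj (φ t) * u t)
  · rw [add_assoc]
    refine hbound (h.isPrimitiveOn_re hq hw hab) (fun t => ?_) ?_
    · simpa using abs_re_le_norm (conj (φ t) * u t)
    · rw [add_mul]
      exact (h.integral_abs_energy_le hq hab hφB).trans (by gcongr)

/-- Corollary 3.6 of the paper (for separated self-adjoint boundary conditions):
if p = 1, the weight w has exactly n turning points and ∫ₐᵇ w ≠ 0, then the
non-real eigenvalues satisfy |Im λ| ≤ (8/ε)α²δ³(n+1) and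
|Re λ| ≤ (2/ε)αδ²(4αδ(n+1) + α + ‖q‖₁). -/
theorem nonreal_eigenvalue_bounds_turning_points_delta
    (a b : ℝ) (hab : a < b) (q w : ℝ → ℝ)
    (hqm : Measurable q) (hwm : Measurable w)
    (hq_int : IntegrableOn q (Set.Ioc a b))
    (hw_int : IntegrableOn w (Set.Ioc a b))
    (hw_ne : ∀ᵐ x ∂(volume.restrict (Set.Ioc a b)), w x ≠ 0)
    (hw_pos : 0 < volume {x ∈ Set.Ioc a b | 0 < w x})
    (hw_neg : 0 < volume {x ∈ Set.Ioc a b | w x < 0})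
    -- w has exactly n turning points x 1 < … < x n in (a,b)
    (n : ℕ) (x : ℕ → ℝ) (hx0 : x 0 = a) (hxlast : x (n + 1) = b)
    (hxmono : ∀ k ≤ n, x k < x (k + 1))
    (s : ℝ) (hs : s = 1 ∨ s = -1)
    (hsign : ∀ k ≤ n, ∀ᵐ t ∂(volume.restrict (Set.Ioo (x k) (x (k + 1)))),
        0 < s * (-1 : ℝ) ^ k * w t)
    (hw0 : (∫ t in a..b, w t) ≠ 0)
    (δ : ℝ) (hδ : δ = 2 + 2 * (∫ t in a..b, |w t|) / |∫ t in a..b, w t|)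
    (l r : ℝ) (α : ℝ)
    (hα : α = |l| + |r| + ∫ t in a..b, |min (q t) 0|)
    (ε : ℝ) (hε : 0 < ε)
    (hεcond : volume {x | x ∈ Set.Ioo a b ∧ |w x| < ε}
        ≤ ENNReal.ofReal (1 / (4 * α * δ ^ 2))) :
    ∀ lam : ℂ, lam.im ≠ 0 →
      ∀ φ u : ℝ → ℂ,
        ContinuousOn φ (Set.Icc a b) → ContinuousOn u (Set.Icc a b) →
        (∀ y ∈ Set.Icc a b, φ y = φ a + ∫ t in a..y, u t) →
        (∀ y ∈ Set.Icc a b,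
            u y = u a + ∫ t in a..y, ((q t : ℂ) - lam * (w t : ℂ)) * φ t) →
        (∃ y ∈ Set.Icc a b, φ y ≠ 0) →
        u a = (l : ℂ) * φ a → u b = (r : ℂ) * φ b →
        |lam.im| ≤ 8 / ε * α ^ 2 * δ ^ 3 * (n + 1)
          ∧ |lam.re| ≤ 2 / ε * α * δ ^ 2 *
              (4 * α * δ * (n + 1) + α + ∫ t in a..b, |q t|) := by
  intro lam hlam φ u hφ hu hφu huφ hne hl hr
  have hx := SturmLiouville.IsSignPartition.of_alternating_sign hx0 hxlast
    (fun k hk => (hxmono k hk).le) hsign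
  have hint {f : ℝ → ℝ} (hf : IntegrableOn f (Set.Ioc a b)) : IntervalIntegrable f volume a b :=
    (intervalIntegrable_iff_integrableOn_Ioc_of_le hab.le).2 hf
  exact nonreal_eigenvalue_bounds_turning_points_delta_general (hint hq_int) (hint hw_int) hx hw0
    hδ hα hε hεcond hlam ⟨hφ, hu, hφu, huφ⟩ hne hl hr
end

section
/- Let λ ∈ ℝ with λ ≠ 0 and let (φ, u) be a solution of −(pφ')' + qφ = λwφ on [a,b] satisfying separated self-adjoint boundary conditions u(a) = l·φ(a), u(b) = r·φ(b) with l, r ∈ ℝ, and suppose λ·∫ₐᵇ w|φ|² ≤ 0. Then ‖φ'‖_{p,2} ≤ β·‖φ‖_{1/p,2} and ‖φ‖_∞ ≤ γ·‖φ‖_{1/p,2}, where the constants α, β, γ are built from c := |l| + |r|. -/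
open MeasureTheory Real Complex

/-!
Write `D = ‖φ'‖_{p,2}`, `N = ‖φ‖_{1/p,2}`, `M = ‖φ‖_∞` and `P = ‖1/p‖_{L¹}`. Pairing the equation
with `φ` and integrating by parts gives `D² = [Re (conj φ * u)]ₐᵇ - ∫ q|φ|² + λ ∫ w|φ|²`; the last
term is nonpositive for a ghost state, the boundary term is at most `c M²`, and so `D² ≤ α M²`.
Conversely `|φ(x)|² ≤ |φ(y)|² + 2 ∫ |φφ'|`; averaging over `y` with weight `1/p` and applying
Cauchy–Schwarz yields `M² ≤ N²/P + 2 N D`. Together `D² ≤ α (N²/P + 2 N D)`, and `β` is the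
larger root of `X² = α (1/P + 2 X)`, so `D ≤ β N`. Putting this back into the bound on `M²`
gives `M² ≤ (1/P + 2 β) N² = γ² N²`.
-/

section Primitive

variable {E : Type*} [NormedAddCommGroup E] [NormedSpace ℝ E] {a b : ℝ}

/-- `F` is absolutely continuous on `[a, b]` with integrable derivative `f`, expressed by the
integral equation a solution of a differential equation with `L¹` coefficients satisfies.
Integrability of `f` is part of the notion so that the integrals are not junk. -/
structure IsPrimitiveOn (F f : ℝ → E) (a b : ℝ) : Prop where
  intervalIntegrable : IntervalIntegrable f volume a b
  eq_add_integral : ∀ x ∈ Set.uIcc a b, F x = F a + ∫ t in a..x, f t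

theorem absolutelyContinuousOnInterval_of_dist_le {X Y : Type*} [PseudoMetricSpace X]
    [PseudoMetricSpace Y] {f : ℝ → X} {g : ℝ → Y} (hg : AbsolutelyContinuousOnInterval g a b)
    (hfg : ∀ x ∈ Set.uIcc a b, ∀ y ∈ Set.uIcc a b, dist (f x) (f y) ≤ dist (g x) (g y)) :
    AbsolutelyContinuousOnInterval f a b := by
  rw [absolutelyContinuousOnInterval_iff] at hg ⊢
  intro ε hε
  obtain ⟨δ, hδ, hgδ⟩ := hg ε hε
  refine ⟨δ, hδ, fun I hI hIδ => (Finset.sum_le_sum fun i hi => ?_).trans_lt (hgδ I hI hIδ)⟩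
  exact hfg _ (hI.1 i hi).1 _ (hI.1 i hi).2

theorem intervalIntegrable_clm_comp {E' : Type*} [NormedAddCommGroup E'] [NormedSpace ℝ E']
    {μ : Measure ℝ} {f : ℝ → E} (L : E →L[ℝ] E') (hf : IntervalIntegrable f μ a b) :
    IntervalIntegrable (fun t => L (f t)) μ a b :=
  ⟨L.integrable_comp hf.1, L.integrable_comp hf.2⟩

namespace IsPrimitiveOn

variable {F f : ℝ → E}

theorem sub_eq_integral (hF : IsPrimitiveOn F f a b) {x y : ℝ} (hx : x ∈ Set.uIcc a b)
    (hy : y ∈ Set.uIcc a b) : F x - F y = ∫ t in y..x, f t := by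
  have integrable_to {z : ℝ} (hz : z ∈ Set.uIcc a b) : IntervalIntegrable f volume a z :=
    hF.intervalIntegrable.mono_set (Set.uIcc_subset_uIcc_left hz)
  rw [hF.eq_add_integral x hx, hF.eq_add_integral y hy, add_sub_add_left_eq_sub,
    intervalIntegral.integral_interval_sub_left (integrable_to hx) (integrable_to hy)]

theorem absolutelyContinuousOnInterval (hF : IsPrimitiveOn F f a b) :
    AbsolutelyContinuousOnInterval F a b := by
  have hnorm := hF.intervalIntegrable.norm
  have hΦ : IsPrimitiveOn (fun x => ∫ t in a..x, ‖f t‖) (fun t => ‖f t‖) a b :=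
    ⟨hnorm, by simp⟩
  refine absolutelyContinuousOnInterval_of_dist_le
    (hnorm.absolutelyContinuousOnInterval_intervalIntegral (Set.left_mem_uIcc (b := b)))
    fun x hx y hy => ?_
  rw [dist_eq_norm, dist_eq_norm, hF.sub_eq_integral hx hy, hΦ.sub_eq_integral hx hy]
  exact intervalIntegral.norm_integral_le_abs_integral_norm

theorem continuousOn (hF : IsPrimitiveOn F f a b) : ContinuousOn F (Set.uIcc a b) :=
  hF.absolutelyContinuousOnInterval.continuousOn

theorem ae_hasDerivAt [CompleteSpace E] (hF : IsPrimitiveOn F f a b) :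
    ∀ᵐ x, x ∈ Set.uIcc a b → HasDerivAt F (f x) x := by
  filter_upwards [hF.intervalIntegrable.ae_hasDerivAt_integral, Measure.ae_ne volume (min a b),
    Measure.ae_ne volume (max a b)] with x hderiv hxmin hxmax hx
  have hmem : Set.uIcc a b ∈ nhds x :=
    Icc_mem_nhds (lt_of_le_of_ne hx.1 hxmin.symm) (lt_of_le_of_ne hx.2 hxmax)
  exact ((hderiv hx a Set.left_mem_uIcc).const_add (F a)).congr_of_eventuallyEq
    (Filter.eventually_of_mem hmem hF.eq_add_integral)

theorem norm_sub_le (hF : IsPrimitiveOn F f a b) (hab : a ≤ b) {x y : ℝ}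
    (hx : x ∈ Set.Icc a b) (hy : y ∈ Set.Icc a b) : ‖F x - F y‖ ≤ ∫ t in a..b, ‖f t‖ := by
  have huIoc : Set.uIoc y x ⊆ Set.uIoc a b := by
    rw [Set.uIoc_of_le hab]
    exact Set.Ioc_subset_Ioc (le_min hy.1 hx.1) (max_le hy.2 hx.2)
  calc ‖F x - F y‖ = ‖∫ t in y..x, f t‖ := by
        rw [hF.sub_eq_integral (Set.Icc_subset_uIcc hx) (Set.Icc_subset_uIcc hy)]
    _ ≤ |∫ t in y..x, ‖f t‖| := intervalIntegral.norm_integral_le_abs_integral_norm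
    _ ≤ |∫ t in a..b, ‖f t‖| := intervalIntegral.abs_integral_mono_interval huIoc
        (.of_forall fun _ => norm_nonneg _) hF.intervalIntegrable.norm
    _ = ∫ t in a..b, ‖f t‖ := abs_of_nonneg
        (intervalIntegral.integral_nonneg hab fun _ _ => norm_nonneg _)

theorem clm_comp [CompleteSpace E] {E' : Type*} [NormedAddCommGroup E'] [NormedSpace ℝ E']
    [CompleteSpace E'] (L : E →L[ℝ] E') (hF : IsPrimitiveOn F f a b) :
    IsPrimitiveOn (fun x => L (F x)) (fun x => L (f x)) a b where
  intervalIntegrable := intervalIntegrable_clm_comp L hF.intervalIntegrable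
  eq_add_integral x hx := by
    rw [L.intervalIntegral_comp_comm
      (hF.intervalIntegrable.mono_set (Set.uIcc_subset_uIcc_left hx)), ← map_add,
      ← hF.eq_add_integral x hx]

theorem mul {A : Type*} [NormedRing A] [NormMulClass A] [NormedAlgebra ℝ A] [CompleteSpace A]
    {F f G g : ℝ → A} (hF : IsPrimitiveOn F f a b) (hG : IsPrimitiveOn G g a b) :
    IsPrimitiveOn (fun x => F x * G x) (fun x => f x * G x + F x * g x) a b := by
  have hint : IntervalIntegrable (fun x => f x * G x + F x * g x) volume a b :=
    (hF.intervalIntegrable.mul_continuousOn hG.continuousOn).add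
      (hG.intervalIntegrable.continuousOn_mul hF.continuousOn)
  have hI : IsPrimitiveOn (fun x => ∫ t in a..x, (f t * G t + F t * g t))
      (fun x => f x * G x + F x * g x) a b := ⟨hint, by simp⟩
  have hderiv_zero : ∀ᵐ x, x ∈ Set.uIcc a b →
      HasDerivAt (fun x => F x * G x - ∫ t in a..x, (f t * G t + F t * g t)) 0 x := by
    filter_upwards [hF.ae_hasDerivAt, hG.ae_hasDerivAt, hI.ae_hasDerivAt] with x hFx hGx hIx hx
    simpa using ((hFx hx).fun_mul (hGx hx)).fun_sub (hIx hx)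
  obtain ⟨C, hC⟩ := ((hF.absolutelyContinuousOnInterval.fun_smul
    hG.absolutelyContinuousOnInterval).fun_sub
      hI.absolutelyContinuousOnInterval).const_of_ae_hasDerivAt_zero hderiv_zero
  refine ⟨hint, fun x hx => ?_⟩
  have hCa : F a * G a = C := by simpa using hC a Set.left_mem_uIcc
  rw [hCa, ← hC x hx, smul_eq_mul, sub_add_cancel]

theorem norm_sq_le_norm_sq_add {A : Type*} [NormedRing A] [NormMulClass A] [NormedAlgebra ℝ A]
    [CompleteSpace A] {F f : ℝ → A} (hF : IsPrimitiveOn F f a b) (hab : a ≤ b) {x y : ℝ}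
    (hx : x ∈ Set.Icc a b) (hy : y ∈ Set.Icc a b) :
    ‖F x‖ ^ 2 ≤ ‖F y‖ ^ 2 + 2 * ∫ t in a..b, ‖F t‖ * ‖f t‖ := by
  have hFF := hF.mul hF
  calc ‖F x‖ ^ 2 = ‖F x * F x‖ := by rw [norm_mul, sq]
    _ ≤ ‖F y * F y‖ + ‖F x * F x - F y * F y‖ := norm_le_norm_add_norm_sub' _ _
    _ ≤ ‖F y * F y‖ + ∫ t in a..b, ‖f t * F t + F t * f t‖ := by
        gcongr; exact hFF.norm_sub_le hab hx hy
    _ ≤ ‖F y * F y‖ + ∫ t in a..b, 2 * (‖F t‖ * ‖f t‖) := by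
        gcongr ‖F y * F y‖ + ?_
        refine intervalIntegral.integral_mono_on hab hFF.intervalIntegrable.norm
          ((hF.intervalIntegrable.norm.continuousOn_mul hF.continuousOn.norm).const_mul 2)
          fun t _ => (norm_add_le _ _).trans_eq ?_
        rw [norm_mul, norm_mul]
        ring
    _ = ‖F y‖ ^ 2 + 2 * ∫ t in a..b, ‖F t‖ * ‖f t‖ := by
        rw [norm_mul, sq, intervalIntegral.integral_const_mul]

end IsPrimitiveOn

end Primitive

theorem intervalIntegrable_div_of_continuousOn {a b : ℝ} {f p : ℝ → ℝ}
    (hp : IntervalIntegrable (fun t => 1 / p t) volume a b) (hf : ContinuousOn f (Set.uIcc a b)) :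
    IntervalIntegrable (fun t => f t / p t) volume a b := by
  simpa only [mul_one_div] using hp.continuousOn_mul hf

section Weighted

variable {α : Type*} [MeasurableSpace α] {μ : Measure α} {f g p q : α → ℝ}

theorem integral_pos_of_ae_pos [NeZero μ] (hf : ∀ᵐ x ∂μ, 0 < f x) (hfi : Integrable f μ) :
    0 < ∫ x, f x ∂μ := by
  have hsupport : Function.support f =ᵐ[μ] Set.univ :=
    Filter.eventuallyEq_univ.2 (hf.mono fun _ hx => hx.ne')
  rw [integral_pos_iff_support_of_nonneg_ae (hf.mono fun _ hx => hx.le) hfi,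
    measure_congr hsupport]
  exact Measure.measure_univ_pos.2 (NeZero.ne μ)

theorem integral_mul_div_le_sqrt_mul_sqrt (hp : ∀ᵐ x ∂μ, 0 ≤ p x)
    (hff : Integrable (fun x => f x ^ 2 / p x) μ) (hfg : Integrable (fun x => f x * g x / p x) μ)
    (hgg : Integrable (fun x => g x ^ 2 / p x) μ) :
    ∫ x, f x * g x / p x ∂μ ≤ √(∫ x, f x ^ 2 / p x ∂μ) * √(∫ x, g x ^ 2 / p x ∂μ) := by
  set A := ∫ x, f x ^ 2 / p x ∂μ
  set B := ∫ x, f x * g x / p x ∂μ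
  set C := ∫ x, g x ^ 2 / p x ∂μ
  have hA : 0 ≤ A := integral_nonneg_of_ae (hp.mono fun x hx => by simp only; positivity)
  have quadratic_nonneg (s : ℝ) : 0 ≤ A * (s * s) + -2 * B * s + C := by
    have expand : ∫ x, (s * f x - g x) ^ 2 / p x ∂μ = A * (s * s) + -2 * B * s + C := by
      calc ∫ x, (s * f x - g x) ^ 2 / p x ∂μ
          = ∫ x, (s * s * (f x ^ 2 / p x) + -2 * s * (f x * g x / p x) + g x ^ 2 / p x) ∂μ :=
            integral_congr_ae (.of_forall fun x => by ring)
        _ = s * s * A + -2 * s * B + C := by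
            rw [integral_add (by fun_prop) hgg, integral_add (by fun_prop) (by fun_prop),
              integral_const_mul, integral_const_mul]
        _ = A * (s * s) + -2 * B * s + C := by ring
    rw [← expand]
    exact integral_nonneg_of_ae (hp.mono fun x hx => by simp only; positivity)
  have hdiscrim := discrim_le_zero quadratic_nonneg
  have hsq : B ^ 2 ≤ A * C := by rw [discrim] at hdiscrim; linarith
  rw [← Real.sqrt_mul hA]
  exact Real.le_sqrt_of_sq_le hsq

theorem le_integral_div_integral_one_div {m : ℝ} (hp : ∀ᵐ x ∂μ, 0 ≤ p x)
    (hp_int : Integrable (fun x => 1 / p x) μ) (hfp : Integrable (fun x => f x / p x) μ)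
    (hpos : 0 < ∫ x, 1 / p x ∂μ) (hm : ∀ᵐ x ∂μ, m ≤ f x) :
    m ≤ (∫ x, f x / p x ∂μ) / ∫ x, 1 / p x ∂μ := by
  rw [le_div_iff₀ hpos, ← integral_const_mul]
  refine integral_mono_ae (hp_int.const_mul m) hfp ?_
  filter_upwards [hp, hm] with x hpx hmx
  rw [mul_one_div]
  gcongr

theorem neg_integral_mul_le {K : ℝ} (hq : Integrable q μ)
    (hqf : Integrable (fun x => q x * f x) μ) (hf : ∀ᵐ x ∂μ, 0 ≤ f x) (hfK : ∀ᵐ x ∂μ, f x ≤ K) :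
    -∫ x, q x * f x ∂μ ≤ (∫ x, |min (q x) 0| ∂μ) * K := by
  have hq_neg : Integrable (fun x => |min (q x) 0|) μ :=
    (hq.inf (integrable_zero α ℝ μ)).abs
  rw [← integral_neg, ← integral_mul_const]
  refine integral_mono_ae hqf.neg (hq_neg.mul_const K) ?_
  filter_upwards [hf, hfK] with x hfx hfKx
  have hqx : -q x ≤ |min (q x) 0| :=
    (neg_le_neg (min_le_left _ _)).trans (neg_le_abs _)
  calc -(q x * f x) = -q x * f x := (neg_mul _ _).symm
    _ ≤ |min (q x) 0| * f x := by gcongr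
    _ ≤ |min (q x) 0| * K := by gcongr

end Weighted

theorem le_mul_of_sq_le_quadratic {D N P α : ℝ} (hα : 0 ≤ α) (hP : 0 ≤ P) (hN : 0 ≤ N)
    (h : D ^ 2 ≤ α * (N ^ 2 / P + 2 * (N * D))) : D ≤ (√(α * (1 / P + α)) + α) * N := by
  have hcompleted : (D - α * N) ^ 2 ≤ (√(α * (1 / P + α)) * N) ^ 2 := by
    rw [mul_pow, Real.sq_sqrt (by positivity)]
    linear_combination h
  linarith [abs_le_of_sq_le_sq' hcompleted (by positivity)]

section Norms

variable {E : Type*} [NormedAddCommGroup E] {a b : ℝ}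

/-- `‖f‖_{1/p,2}`, the `L²` norm on `(a, b)` with weight `1/p`; applied to the quasi-derivative
`u = pφ'` it is `‖φ'‖_{p,2}`, as `p|φ'|² = |u|²/p`. -/
noncomputable def weightedL2Norm (p : ℝ → ℝ) (a b : ℝ) (f : ℝ → E) : ℝ :=
  √(∫ t in a..b, ‖f t‖ ^ 2 / p t)

/-- `‖f‖_∞`, the supremum of `‖f‖` over the closed interval `[a, b]`; junk if `f` is unbounded. -/
noncomputable def supNormOn (a b : ℝ) (f : ℝ → E) : ℝ :=
  sSup ((fun x => ‖f x‖) '' Set.Icc a b)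

theorem sq_weightedL2Norm {p : ℝ → ℝ} (hab : a ≤ b)
    (hp : ∀ᵐ x ∂volume.restrict (Set.Ioc a b), 0 ≤ p x) (f : ℝ → E) :
    weightedL2Norm p a b f ^ 2 = ∫ t in a..b, ‖f t‖ ^ 2 / p t := by
  refine Real.sq_sqrt ?_
  rw [intervalIntegral.integral_of_le hab]
  exact integral_nonneg_of_ae (hp.mono fun x hx => by simp only; positivity)

theorem norm_le_supNormOn {f : ℝ → E} (hf : ContinuousOn f (Set.Icc a b)) {x : ℝ}
    (hx : x ∈ Set.Icc a b) : ‖f x‖ ≤ supNormOn a b f :=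
  le_csSup (isCompact_Icc.bddAbove_image hf.norm) (Set.mem_image_of_mem _ hx)

theorem exists_supNormOn_eq (hab : a ≤ b) {f : ℝ → E} (hf : ContinuousOn f (Set.Icc a b)) :
    ∃ x ∈ Set.Icc a b, supNormOn a b f = ‖f x‖ :=
  isCompact_Icc.exists_sSup_image_eq (Set.nonempty_Icc.2 hab) hf.norm

end Norms

/-- `(φ, u)` solves `-(pφ')' + qφ = λwφ` on `[a, b]`, where `u` is the quasi-derivative `pφ'`:
`φ` is a primitive of `u/p` and `u` one of `(q - λw)φ`. -/
structure IsSturmLiouvilleSolution (a b : ℝ) (p q w : ℝ → ℝ) (lam : ℂ) (φ u : ℝ → ℂ) :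
    Prop where
  isPrimitiveOn : IsPrimitiveOn φ (fun t => u t / p t) a b
  isPrimitiveOn_quasiDeriv : IsPrimitiveOn u (fun t => (q t - lam * w t) * φ t) a b

open scoped ComplexConjugate

section Estimates

variable {a b : ℝ} {p q w : ℝ → ℝ} {φ u : ℝ → ℂ}

theorem IsSturmLiouvilleSolution.of_continuousOn {lam : ℂ}
    (hp : IntervalIntegrable (fun t => 1 / p t) volume a b)
    (hq : IntervalIntegrable q volume a b) (hw : IntervalIntegrable w volume a b)
    (hφc : ContinuousOn φ (Set.uIcc a b)) (huc : ContinuousOn u (Set.uIcc a b))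
    (hφ : ∀ x ∈ Set.uIcc a b, φ x = φ a + ∫ t in a..x, u t / (p t : ℂ))
    (hu : ∀ x ∈ Set.uIcc a b, u x = u a + ∫ t in a..x, ((q t : ℂ) - lam * (w t : ℂ)) * φ t) :
    IsSturmLiouvilleSolution a b p q w lam φ u where
  isPrimitiveOn := by
    refine ⟨?_, hφ⟩
    simpa only [ofRealCLM_apply, ofReal_div, ofReal_one, mul_one_div] using
      (intervalIntegrable_clm_comp ofRealCLM hp).continuousOn_mul huc
  isPrimitiveOn_quasiDeriv :=
    ⟨((intervalIntegrable_clm_comp ofRealCLM hq).sub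
      ((intervalIntegrable_clm_comp ofRealCLM hw).const_mul lam)).mul_continuousOn hφc, hu⟩

theorem re_conj_mul_mul_self (c z : ℂ) : (conj z * (c * z)).re = c.re * ‖z‖ ^ 2 := by
  rw [mul_left_comm, conj_mul', ← ofReal_pow, re_mul_ofReal]

theorem IsPrimitiveOn.integral_energy {V : ℝ → ℂ}
    (hφ : IsPrimitiveOn φ (fun t => u t / p t) a b)
    (hu : IsPrimitiveOn u (fun t => V t * φ t) a b) :
    (∫ t in a..b, ‖u t‖ ^ 2 / p t) + ∫ t in a..b, (V t).re * ‖φ t‖ ^ 2 =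
      (conj (φ b) * u b).re - (conj (φ a) * u a).re := by
  have hφconj : IsPrimitiveOn (fun t => conj (φ t)) (fun t => conj (u t / p t)) a b :=
    hφ.clm_comp (conjCLE : ℂ →L[ℝ] ℂ)
  have hflux : IsPrimitiveOn (fun t => (conj (φ t) * u t).re)
      (fun t => (conj (u t / p t) * u t + conj (φ t) * (V t * φ t)).re) a b :=
    (hφconj.mul hu).clm_comp reCLM
  have kinetic (t : ℝ) : (conj (u t / p t) * u t).re = ‖u t‖ ^ 2 / p t := by
    rw [map_div₀, conj_ofReal, div_mul_eq_mul_div, conj_mul', ← ofReal_pow, div_ofReal_re,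
      ofReal_re]
  have hkin : IntervalIntegrable (fun t => ‖u t‖ ^ 2 / p t) volume a b := by
    simpa only [reCLM_apply, kinetic] using intervalIntegrable_clm_comp reCLM
      (hφconj.intervalIntegrable.mul_continuousOn hu.continuousOn)
  have hpot : IntervalIntegrable (fun t => (V t).re * ‖φ t‖ ^ 2) volume a b := by
    simpa only [reCLM_apply, re_conj_mul_mul_self] using intervalIntegrable_clm_comp reCLM
      (hu.intervalIntegrable.continuousOn_mul hφconj.continuousOn)
  have hbalance := hflux.sub_eq_integral Set.right_mem_uIcc Set.left_mem_uIcc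
  simp only [add_re, kinetic, re_conj_mul_mul_self] at hbalance
  rw [hbalance, intervalIntegral.integral_add hkin hpot]

theorem boundary_form_le_of_separated {y z : ℂ} {l r M : ℝ} (hy : ‖y‖ ≤ M) (hz : ‖z‖ ≤ M) :
    (conj z * (r * z)).re - (conj y * (l * y)).re ≤ (|l| + |r|) * M ^ 2 := by
  calc (conj z * (r * z)).re - (conj y * (l * y)).re = -l * ‖y‖ ^ 2 + r * ‖z‖ ^ 2 := by
        rw [re_conj_mul_mul_self, re_conj_mul_mul_self, ofReal_re, ofReal_re]; ring
    _ ≤ |l| * M ^ 2 + |r| * M ^ 2 := by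
        gcongr
        · exact neg_le_abs l
        · exact le_abs_self r
    _ = (|l| + |r|) * M ^ 2 := by ring

theorem IsPrimitiveOn.norm_sq_le_weightedL2Norm (hφ : IsPrimitiveOn φ (fun t => u t / p t) a b)
    (hu : ContinuousOn u (Set.uIcc a b)) (hab : a < b)
    (hp_pos : ∀ᵐ x ∂volume.restrict (Set.Ioc a b), 0 < p x)
    (hp_int : IntervalIntegrable (fun x => 1 / p x) volume a b) {x : ℝ} (hx : x ∈ Set.Icc a b) :
    ‖φ x‖ ^ 2 ≤ weightedL2Norm p a b φ ^ 2 / (∫ t in a..b, 1 / p t) +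
      2 * (weightedL2Norm p a b φ * weightedL2Norm p a b u) := by
  have hp_nonneg := hp_pos.mono fun _ hpx => hpx.le
  have integrable_div {f : ℝ → ℝ} (hf : ContinuousOn f (Set.uIcc a b)) :
      IntegrableOn (fun t => f t / p t) (Set.Ioc a b) :=
    (intervalIntegrable_div_of_continuousOn hp_int hf).1
  have hφn := hφ.continuousOn.norm
  have cauchy_schwarz : ∫ t in a..b, ‖φ t‖ * ‖u t / p t‖ ≤
      weightedL2Norm p a b φ * weightedL2Norm p a b u := by
    simp only [weightedL2Norm, intervalIntegral.integral_of_le hab.le]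
    refine Eq.trans_le (integral_congr_ae ?_) (integral_mul_div_le_sqrt_mul_sqrt hp_nonneg
      (integrable_div (hφn.pow 2)) (integrable_div (hφn.mul hu.norm))
      (integrable_div (hu.norm.pow 2)))
    filter_upwards [hp_nonneg] with t hpt
    rw [norm_div, norm_real, norm_of_nonneg hpt, mul_div_assoc]
  rw [← sub_le_iff_le_add, sq_weightedL2Norm hab.le hp_nonneg]
  simp only [intervalIntegral.integral_of_le hab.le]
  have : NeZero (volume.restrict (Set.Ioc a b)) := ⟨by simp [hab]⟩
  refine le_integral_div_integral_one_div hp_nonneg hp_int.1 (integrable_div (hφn.pow 2))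
    (integral_pos_of_ae_pos (hp_pos.mono fun t hpt => one_div_pos.2 hpt) hp_int.1) ?_
  filter_upwards [ae_restrict_mem measurableSet_Ioc] with y hy
  linarith [hφ.norm_sq_le_norm_sq_add hab.le hx (Set.Ioc_subset_Icc_self hy)]

theorem IsSturmLiouvilleSolution.sq_weightedL2Norm_quasiDeriv_le {lam : ℂ}
    (h : IsSturmLiouvilleSolution a b p q w lam φ u) (hab : a ≤ b)
    (hp : ∀ᵐ x ∂volume.restrict (Set.Ioc a b), 0 ≤ p x)
    (hq : IntervalIntegrable q volume a b) (hw : IntervalIntegrable w volume a b)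
    (hghost : lam.re * ∫ t in a..b, w t * ‖φ t‖ ^ 2 ≤ 0) {c : ℝ}
    (hbc : (conj (φ b) * u b).re - (conj (φ a) * u a).re ≤ c * supNormOn a b φ ^ 2) :
    weightedL2Norm p a b u ^ 2 ≤
      (c + ∫ t in a..b, |min (q t) 0|) * supNormOn a b φ ^ 2 := by
  have hφc : ContinuousOn φ (Set.Icc a b) := Set.uIcc_of_le hab ▸ h.isPrimitiveOn.continuousOn
  have hφ_sq : ContinuousOn (fun t => ‖φ t‖ ^ 2) (Set.uIcc a b) :=
    h.isPrimitiveOn.continuousOn.norm.pow 2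
  have hqφ := hq.mul_continuousOn hφ_sq
  have hwφ := hw.mul_continuousOn hφ_sq
  have potential : ∫ t in a..b, (q t - lam * w t : ℂ).re * ‖φ t‖ ^ 2 =
      (∫ t in a..b, q t * ‖φ t‖ ^ 2) - lam.re * ∫ t in a..b, w t * ‖φ t‖ ^ 2 := by
    simp only [sub_re, ofReal_re, re_mul_ofReal, sub_mul, mul_assoc]
    rw [intervalIntegral.integral_sub hqφ (hwφ.const_mul lam.re),
      intervalIntegral.integral_const_mul]
  have energy := h.isPrimitiveOn.integral_energy h.isPrimitiveOn_quasiDeriv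
  rw [potential, ← sq_weightedL2Norm hab hp] at energy
  have negative_part : -∫ t in a..b, q t * ‖φ t‖ ^ 2 ≤
      (∫ t in a..b, |min (q t) 0|) * supNormOn a b φ ^ 2 := by
    simp only [intervalIntegral.integral_of_le hab]
    refine neg_integral_mul_le hq.1 hqφ.1 (.of_forall fun t => by positivity) ?_
    filter_upwards [ae_restrict_mem measurableSet_Ioc] with t ht
    gcongr
    exact norm_le_supNormOn hφc (Set.Ioc_subset_Icc_self ht)
  linarith

end Estimates

theorem ghost_state_norm_estimates_separated_general {a b : ℝ} (hab : a < b) {p q w : ℝ → ℝ}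
    (hp_pos : ∀ᵐ x ∂volume.restrict (Set.Ioc a b), 0 < p x)
    (hp_int : IntervalIntegrable (fun x => 1 / p x) volume a b)
    (hq_int : IntervalIntegrable q volume a b) (hw_int : IntervalIntegrable w volume a b)
    {lam : ℂ} {φ u : ℝ → ℂ}
    (h : IsSturmLiouvilleSolution a b p q w lam φ u)
    (hghost : lam.re * ∫ t in a..b, w t * ‖φ t‖ ^ 2 ≤ 0) {c α β γ : ℝ} (hc : 0 ≤ c)
    (hbc : (conj (φ b) * u b).re - (conj (φ a) * u a).re ≤ c * supNormOn a b φ ^ 2)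
    (hα : α = c + ∫ t in a..b, |min (q t) 0|)
    (hβ : β = √(α * (1 / (∫ t in a..b, 1 / p t) + α)) + α)
    (hγ : γ = √(2 * β + 1 / (∫ t in a..b, 1 / p t))) :
    weightedL2Norm p a b u ≤ β * weightedL2Norm p a b φ ∧
      supNormOn a b φ ≤ γ * weightedL2Norm p a b φ := by
  set P := ∫ t in a..b, 1 / p t
  set N := weightedL2Norm p a b φ
  set D := weightedL2Norm p a b u
  have hp_nonneg := hp_pos.mono fun _ hpx => hpx.le
  have hφc := h.isPrimitiveOn.continuousOn
  have hP : 0 ≤ P := by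
    simp only [P, intervalIntegral.integral_of_le hab.le]
    exact integral_nonneg_of_ae (hp_nonneg.mono fun t hpt => one_div_nonneg.2 hpt)
  have hN : 0 ≤ N := Real.sqrt_nonneg _
  have hα_nonneg : 0 ≤ α := by
    have := intervalIntegral.integral_nonneg (μ := volume) hab.le
      fun t _ => abs_nonneg (min (q t) 0)
    linarith
  have sobolev : supNormOn a b φ ^ 2 ≤ N ^ 2 / P + 2 * (N * D) := by
    obtain ⟨x, hx, hmax⟩ := exists_supNormOn_eq hab.le (Set.uIcc_of_le hab.le ▸ hφc)
    rw [hmax]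
    exact h.isPrimitiveOn.norm_sq_le_weightedL2Norm h.isPrimitiveOn_quasiDeriv.continuousOn hab
      hp_pos hp_int hx
  have energy : D ^ 2 ≤ α * supNormOn a b φ ^ 2 := hα ▸
    h.sq_weightedL2Norm_quasiDeriv_le hab.le hp_nonneg hq_int hw_int hghost hbc
  have hD : D ≤ β * N := hβ ▸ le_mul_of_sq_le_quadratic hα_nonneg hP hN
    (energy.trans (by gcongr))
  refine ⟨hD, ?_⟩
  rw [hγ, ← Real.sqrt_sq hN, ← Real.sqrt_mul' _ (sq_nonneg N)]
  refine Real.le_sqrt_of_sq_le ?_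
  calc supNormOn a b φ ^ 2 ≤ N ^ 2 / P + 2 * (N * D) := sobolev
    _ ≤ N ^ 2 / P + 2 * (N * (β * N)) := by gcongr
    _ = (2 * β + 1 / P) * N ^ 2 := by ring

/-- Lemma 4.2 of the paper for separated self-adjoint boundary conditions:
for a real eigenvalue λ ≠ 0 whose eigenfunction satisfies λ∫ₐᵇ w|φ|² ≤ 0,
‖φ'‖_{p,2} ≤ β·‖φ‖_{1/p,2} and ‖φ‖_∞ ≤ γ·‖φ‖_{1/p,2}. -/
theorem ghost_state_norm_estimates_separated
    (a b : ℝ) (hab : a < b) (p q w : ℝ → ℝ)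
    (hpm : Measurable p) (hqm : Measurable q) (hwm : Measurable w)
    (hp_pos : ∀ᵐ x ∂(volume.restrict (Set.Ioc a b)), 0 < p x)
    (hp_int : IntegrableOn (fun x => 1 / p x) (Set.Ioc a b))
    (hq_int : IntegrableOn q (Set.Ioc a b))
    (hw_int : IntegrableOn w (Set.Ioc a b))
    (hw_ne : ∀ᵐ x ∂(volume.restrict (Set.Ioc a b)), w x ≠ 0)
    (lam : ℝ) (hlam : lam ≠ 0) (φ u : ℝ → ℂ)
    (hφc : ContinuousOn φ (Set.Icc a b)) (huc : ContinuousOn u (Set.Icc a b))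
    (hφ : ∀ x ∈ Set.Icc a b, φ x = φ a + ∫ t in a..x, u t / (p t : ℂ))
    (hu : ∀ x ∈ Set.Icc a b,
        u x = u a + ∫ t in a..x, ((q t : ℂ) - (lam : ℂ) * (w t : ℂ)) * φ t)
    (l r : ℝ) (hbca : u a = (l : ℂ) * φ a) (hbcb : u b = (r : ℂ) * φ b)
    (hghost : lam * ∫ t in a..b, w t * ‖φ t‖ ^ 2 ≤ 0)
    (c α β γ : ℝ)
    (hc : c = |l| + |r|)
    (hα : α = c + ∫ t in a..b, |min (q t) 0|)
    (hβ : β = Real.sqrt (α * (1 / (∫ t in a..b, 1 / p t) + α)) + α)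
    (hγ : γ = Real.sqrt (2 * β + 1 / (∫ t in a..b, 1 / p t))) :
    Real.sqrt (∫ t in a..b, ‖u t‖ ^ 2 / p t)
        ≤ β * Real.sqrt (∫ t in a..b, ‖φ t‖ ^ 2 / p t)
      ∧ sSup ((fun x => ‖φ x‖) '' Set.Icc a b)
        ≤ γ * Real.sqrt (∫ t in a..b, ‖φ t‖ ^ 2 / p t) := by
  have integrable {f : ℝ → ℝ} (hf : IntegrableOn f (Set.Ioc a b)) :
      IntervalIntegrable f volume a b :=
    (intervalIntegrable_iff_integrableOn_Ioc_of_le hab.le).2 hf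
  have hIcc := Set.uIcc_of_le hab.le
  have hsol : IsSturmLiouvilleSolution a b p q w lam φ u :=
    .of_continuousOn (integrable hp_int) (integrable hq_int) (integrable hw_int)
      (hIcc ▸ hφc) (hIcc ▸ huc) (hIcc ▸ hφ) (hIcc ▸ hu)
  have hbc : (conj (φ b) * u b).re - (conj (φ a) * u a).re ≤ c * supNormOn a b φ ^ 2 := by
    rw [hbca, hbcb, hc]
    exact boundary_form_le_of_separated (norm_le_supNormOn hφc (Set.left_mem_Icc.2 hab.le))
      (norm_le_supNormOn hφc (Set.right_mem_Icc.2 hab.le))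
  exact ghost_state_norm_estimates_separated_general hab hp_pos (integrable hp_int)
    (integrable hq_int) (integrable hw_int) hsol hghost (by rw [hc]; positivity) hbc hα hβ hγ
end

section
/- Let g : [0, 1/π] → ℝ be defined by g(x) := x⁴·sin(1/x) for x ∈ (0, 1/π] and g(0) := 0. Then g is absolutely continuous on [0, 1/π], sup_{x ∈ [0,1/π]} |g(x)| ≤ 0.003, and (∫₀^{1/π} |g'(x)|² dx)^{1/2} ≤ 0.02. -/
open MeasureTheory Real

/-!
For the `L²` bound, put `s = sin (1/x)` and `c = cos (1/x)`. The square of the derivative of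
`x ^ (n + 2) * s` differs from the derivative of
`x ^ (2n+1) / (2(2n+1)) + (n+3)/2 * x ^ (2n+3) * s² - 1/2 * x ^ (2n+2) * s * c`
by the nonnegative term `(n+1)/2 * x ^ (2n+2) * s²`. Since `s` vanishes at `x = 1/π`, only the
first summand survives there; for `n = 2` this gives `∫ g'² ≤ π⁻⁵ / 10 < 0.02²`.

For the uniform bound, put `u = 1/x ≥ π`, so that the claim is `|sin u| ≤ 0.003 * u ^ 4`. The
tangent of `sin` at `π / 4`, shifted by `π`, gives `|sin u| ≤ √2/2 * (u - a)` with
`a = 5π/4 - 1`, and by weighted AM-GM `u - a ≤ 27/256 * u ^ 4 / a ^ 3`.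
-/

theorem continuous_smul_comp_inv {𝕜 E : Type*} [NormedField 𝕜] [SeminormedAddCommGroup E]
    [NormedSpace 𝕜 E] {φ : 𝕜 → 𝕜} {f : 𝕜 → E} {C : ℝ} (hφ : Continuous φ) (hφ₀ : φ 0 = 0)
    (hf : Continuous f) (hfC : ∀ x, ‖f x‖ ≤ C) : Continuous fun x => φ x • f x⁻¹ := by
  refine continuous_iff_continuousAt.2 fun x => ?_
  rcases eq_or_ne x 0 with rfl | hx
  · have hbdd : Filter.IsBoundedUnder (· ≤ ·) (nhds 0) (norm ∘ fun x : 𝕜 => f x⁻¹) :=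
      Filter.isBoundedUnder_of ⟨C, fun x => hfC x⁻¹⟩
    simpa [ContinuousAt, hφ₀] using (hφ.tendsto' 0 0 hφ₀).zero_smul_isBoundedUnder_le hbdd
  · exact hφ.continuousAt.smul (hf.continuousAt.comp (continuousAt_inv₀ hx))

/-- The chirp `x ^ n * sin (1 / x)`, whose value at `0` is `0` for every `n`, since `0⁻¹ = 0` and
`sin 0 = 0`. -/
noncomputable def chirp (n : ℕ) (x : ℝ) : ℝ := x ^ n * sin x⁻¹

/-- The derivative of `chirp (n + 2)` away from `0`; the index is shifted to avoid truncated
subtraction in the exponents. -/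
noncomputable def chirpDeriv (n : ℕ) (x : ℝ) : ℝ :=
  (n + 2) * x ^ (n + 1) * sin x⁻¹ - x ^ n * cos x⁻¹

/-- A function vanishing at `0` whose derivative dominates `chirpDeriv n ^ 2` away from `0`. It
comes from integrating by parts the terms of `chirpDeriv n ^ 2` oscillating with phase `2 / x`. -/
noncomputable def chirpEnergyMajorant (n : ℕ) (x : ℝ) : ℝ :=
  x ^ (2 * n + 1) / (2 * (2 * n + 1)) + (n + 3) / 2 * (x ^ (2 * n + 3) * sin x⁻¹ ^ 2)
    - 1 / 2 * (x ^ (2 * n + 2) * (sin x⁻¹ * cos x⁻¹))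

section Chirp

variable {n : ℕ} {x : ℝ}

theorem continuous_chirp (hn : n ≠ 0) : Continuous (chirp n) :=
  continuous_smul_comp_inv (continuous_pow n) (zero_pow hn) continuous_sin abs_sin_le_one

theorem continuous_chirpDeriv (hn : n ≠ 0) : Continuous (chirpDeriv n) := by
  have hsin : Continuous fun x : ℝ => (n + 2) * x ^ (n + 1) * sin x⁻¹ :=
    continuous_smul_comp_inv (φ := fun x : ℝ => (n + 2) * x ^ (n + 1)) (by fun_prop) (by simp)
      continuous_sin abs_sin_le_one
  have hcos : Continuous fun x : ℝ => x ^ n * cos x⁻¹ :=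
    continuous_smul_comp_inv (continuous_pow n) (zero_pow hn) continuous_cos abs_cos_le_one
  exact hsin.sub hcos

theorem hasDerivAt_chirp (hx : x ≠ 0) : HasDerivAt (chirp (n + 2)) (chirpDeriv n x) x := by
  refine ((hasDerivAt_pow (n + 2) x).mul (hasDerivAt_inv hx).sin).congr_deriv ?_
  rw [chirpDeriv]
  push_cast
  field_simp
  ring

theorem integral_chirpDeriv (hn : n ≠ 0) (a b : ℝ) :
    ∫ x in a..b, chirpDeriv n x = chirp (n + 2) b - chirp (n + 2) a :=
  integral_eq_of_hasDerivAt_off_countable _ _ (Set.countable_singleton 0)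
    (continuous_chirp (by lia)).continuousOn (fun _ hx => hasDerivAt_chirp hx.2)
    ((continuous_chirpDeriv hn).intervalIntegrable a b)

theorem chirpEnergyMajorant_zero (n : ℕ) : chirpEnergyMajorant n 0 = 0 := by
  simp [chirpEnergyMajorant]

theorem chirpEnergyMajorant_of_sin_inv_eq_zero (hx : sin x⁻¹ = 0) :
    chirpEnergyMajorant n x = x ^ (2 * n + 1) / (2 * (2 * n + 1)) := by
  simp [chirpEnergyMajorant, hx]

theorem continuous_chirpEnergyMajorant (n : ℕ) : Continuous (chirpEnergyMajorant n) := by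
  have hsinsq : Continuous fun x : ℝ => x ^ (2 * n + 3) * sin x⁻¹ ^ 2 :=
    continuous_smul_comp_inv (f := fun y => sin y ^ 2) (C := 1) (continuous_pow _) (by simp)
      (by fun_prop) fun y => by simpa using sin_sq_le_one y
  have hsincos : Continuous fun x : ℝ => x ^ (2 * n + 2) * (sin x⁻¹ * cos x⁻¹) :=
    continuous_smul_comp_inv (f := fun y => sin y * cos y) (C := 1) (continuous_pow _) (by simp)
      (by fun_prop) fun y => by
        rw [norm_mul]
        exact mul_le_one₀ (abs_sin_le_one y) (norm_nonneg _) (abs_cos_le_one y)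
  exact (((continuous_pow _).div_const _).add (hsinsq.const_mul _)).sub (hsincos.const_mul _)

theorem hasDerivAt_chirpEnergyMajorant (hx : x ≠ 0) :
    HasDerivAt (chirpEnergyMajorant n)
      (chirpDeriv n x ^ 2 + (n + 1) / 2 * x ^ (2 * n + 2) * sin x⁻¹ ^ 2) x := by
  have hsin := (hasDerivAt_inv hx).sin
  have hcos := (hasDerivAt_inv hx).cos
  refine ((((hasDerivAt_pow (2 * n + 1) x).div_const _).add
    (((hasDerivAt_pow (2 * n + 3) x).mul (hsin.fun_pow 2)).const_mul _)).sub
    (((hasDerivAt_pow (2 * n + 2) x).mul (hsin.fun_mul hcos)).const_mul _)).congr_deriv ?_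
  have hn : (2 * n + 1 : ℝ) ≠ 0 := by positivity
  simp only [chirpDeriv, add_tsub_cancel_right, Nat.add_succ_sub_one]
  push_cast
  field_simp
  linear_combination (-x ^ (2 * n + 2)) * sin_sq_add_cos_sq (1 / x)

theorem integral_sq_chirpDeriv_le (hn : n ≠ 0) {b : ℝ} (hb : 0 ≤ b) :
    ∫ x in 0..b, chirpDeriv n x ^ 2 ≤ chirpEnergyMajorant n b := by
  have hle := intervalIntegral.integral_le_sub_of_hasDeriv_right_of_le hb
    (continuous_chirpEnergyMajorant n).continuousOn
    (fun x hx => (hasDerivAt_chirpEnergyMajorant hx.1.ne').hasDerivWithinAt)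
    ((continuous_chirpDeriv hn).pow 2).continuousOn.integrableOn_Icc
    (fun x hx => le_add_of_nonneg_right (by have := hx.1; positivity))
  rwa [chirpEnergyMajorant_zero, sub_zero] at hle

end Chirp

theorem sqrt_integral_sq_chirpDeriv_two_le :
    √(∫ x in 0..π⁻¹, chirpDeriv 2 x ^ 2) ≤ 0.02 := by
  rw [sqrt_le_left (by norm_num)]
  have hpi : π⁻¹ ≤ 3.14⁻¹ := inv_anti₀ (by norm_num) pi_gt_d2.le
  calc ∫ x in 0..π⁻¹, chirpDeriv 2 x ^ 2
      ≤ chirpEnergyMajorant 2 π⁻¹ := integral_sq_chirpDeriv_le two_ne_zero (by positivity)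
    _ = π⁻¹ ^ 5 / 10 := by
        rw [chirpEnergyMajorant_of_sin_inv_eq_zero (by simp)]
        norm_num
    _ ≤ 3.14⁻¹ ^ 5 / 10 := by gcongr
    _ ≤ 0.02 ^ 2 := by norm_num

theorem le_add_mul_sub_of_concaveOn_of_hasDerivAt {S : Set ℝ} {f : ℝ → ℝ} {f' a x : ℝ}
    (hf : ConcaveOn ℝ S f) (ha : a ∈ S) (hx : x ∈ S) (hfa : HasDerivAt f f' a) :
    f x ≤ f a + f' * (x - a) := by
  rcases lt_trichotomy x a with hxa | rfl | hax
  · have hslope := hf.le_slope_of_hasDerivAt hx ha hxa hfa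
    rw [slope_def_field, le_div_iff₀ (sub_pos.2 hxa)] at hslope
    linarith
  · simp
  · have hslope := hf.slope_le_of_hasDerivAt ha hx hax hfa
    rw [slope_def_field, div_le_iff₀ (sub_pos.2 hax)] at hslope
    linarith

theorem abs_sin_le_sin_add_cos_mul_sub {a x : ℝ} (ha : a ∈ Set.Icc 0 (π / 2)) (hx : 0 ≤ x) :
    |sin x| ≤ sin a + cos a * (x - a) := by
  have hpi := pi_pos
  have tangent {y : ℝ} (hy : y ∈ Set.Icc 0 π) : sin y ≤ sin a + cos a * (y - a) :=
    le_add_mul_sub_of_concaveOn_of_hasDerivAt strictConcaveOn_sin_Icc.concaveOn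
      ⟨ha.1, by linarith [ha.2]⟩ hy (hasDerivAt_sin a)
  rcases le_total x (π / 2) with hxpi | hxpi
  · rw [abs_of_nonneg (sin_nonneg_of_nonneg_of_le_pi hx (by linarith))]
    exact tangent ⟨hx, by linarith⟩
  · have hcos : 0 ≤ cos a := cos_nonneg_of_neg_pi_div_two_le_of_le (by linarith [ha.1]) ha.2
    calc |sin x| ≤ 1 := abs_sin_le_one x
      _ = sin (π / 2) := sin_pi_div_two.symm
      _ ≤ sin a + cos a * (π / 2 - a) := tangent ⟨by linarith, by linarith⟩
      _ ≤ sin a + cos a * (x - a) := by gcongr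

theorem sub_mul_pow_three_le {R : Type*} [CommRing R] [LinearOrder R] [IsStrictOrderedRing R]
    (u a : R) : 256 * ((u - a) * a ^ 3) ≤ 27 * u ^ 4 := by
  have hfactor : 27 * u ^ 4 - 256 * ((u - a) * a ^ 3)
      = (3 * u - 4 * a) ^ 2 * (2 * u ^ 2 + (u + 4 * a) ^ 2) := by ring
  exact sub_nonneg.1 (hfactor ▸ by positivity)

theorem abs_sin_le_mul_pow_four {u : ℝ} (hu : π ≤ u) : |sin u| ≤ 0.003 * u ^ 4 := by
  have hpi := pi_gt_d2
  set a : ℝ := 5 * π / 4 - 1 with ha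
  have htangent : |sin u| ≤ √2 / 2 * (u - a) := by
    have h := abs_sin_le_sin_add_cos_mul_sub (a := π / 4) (x := u - π)
      ⟨by positivity, by linarith⟩ (by linarith)
    rw [sin_sub_pi, abs_neg, sin_pi_div_four, cos_pi_div_four] at h
    calc |sin u| ≤ √2 / 2 + √2 / 2 * (u - π - π / 4) := h
      _ = √2 / 2 * (u - a) := by rw [ha]; ring
  have ha3 : 25 ≤ a ^ 3 := calc
    (25 : ℝ) ≤ 2.925 ^ 3 := by norm_num
    _ ≤ a ^ 3 := by
      gcongr
      norm_num at hpi ⊢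
      linarith
  have hsqrt : √2 ≤ 1.415 := (sqrt_le_left (by norm_num)).2 (by norm_num)
  refine le_of_mul_le_mul_right ?_ (by positivity : 0 < a ^ 3)
  calc |sin u| * a ^ 3 ≤ √2 / 2 * (u - a) * a ^ 3 := by gcongr
    _ = √2 / 512 * (256 * ((u - a) * a ^ 3)) := by ring
    _ ≤ √2 / 512 * (27 * u ^ 4) :=
      mul_le_mul_of_nonneg_left (sub_mul_pow_three_le u a) (by positivity)
    _ ≤ 1.415 / 512 * (27 * u ^ 4) := by gcongr
    _ ≤ 0.003 * u ^ 4 * 25 := by linarith [show 0 ≤ u ^ 4 by positivity]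
    _ ≤ 0.003 * u ^ 4 * a ^ 3 := by gcongr

theorem abs_chirp_four_le {x : ℝ} (hx : x ∈ Set.Icc 0 π⁻¹) : |chirp 4 x| ≤ 0.003 := by
  rcases hx.1.eq_or_lt with rfl | hx₀
  · norm_num [chirp]
  · have hu : π ≤ x⁻¹ := (le_inv_comm₀ hx₀ pi_pos).1 hx.2
    calc |chirp 4 x| = x ^ 4 * |sin x⁻¹| := by rw [chirp, abs_mul, abs_of_pos (by positivity)]
      _ ≤ x ^ 4 * (0.003 * x⁻¹ ^ 4) := by gcongr; exact abs_sin_le_mul_pow_four hu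
      _ = 0.003 := by field_simp

/-- Example 3.4 of the paper: the function g(x) = x⁴·sin(1/x) (with g(0) = 0) is
absolutely continuous on [0, 1/π] (with a.e. derivative
g'(x) = 4x³·sin(1/x) − x²·cos(1/x)), ‖g‖_∞ ≤ 0.003 and ‖g'‖_{L²} ≤ 0.02. -/
theorem example_comparison_function :
    ∀ g : ℝ → ℝ,
      (∀ x : ℝ, g x = if x = 0 then 0 else x ^ 4 * Real.sin (1 / x)) →
      (∃ g' : ℝ → ℝ,
          IntegrableOn g' (Set.Icc 0 (1 / π))
        ∧ (∀ x ∈ Set.Ioc (0 : ℝ) (1 / π),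
            g' x = 4 * x ^ 3 * Real.sin (1 / x) - x ^ 2 * Real.cos (1 / x))
        ∧ (∀ x ∈ Set.Icc (0 : ℝ) (1 / π), g x = ∫ t in (0 : ℝ)..x, g' t)
        ∧ Real.sqrt (∫ t in (0 : ℝ)..(1 / π), g' t ^ 2) ≤ 0.02)
      ∧ (∀ x ∈ Set.Icc (0 : ℝ) (1 / π), |g x| ≤ 0.003) := by
  intro g hg
  simp only [one_div] at hg ⊢
  obtain rfl : g = chirp 4 := by
    ext x
    rw [hg, chirp]
    split_ifs with hx <;> simp [hx]
  refine ⟨⟨chirpDeriv 2, (continuous_chirpDeriv two_ne_zero).continuousOn.integrableOn_Icc,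
    fun x _ => ?_, fun x _ => ?_, sqrt_integral_sq_chirpDeriv_two_le⟩,
    fun x hx => abs_chirp_four_le hx⟩
  · norm_num [chirpDeriv]
  · rw [integral_chirpDeriv two_ne_zero]
    simp [chirp]
end
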